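/- arXiv:2411.12881 — 2 statements merged into one kernel-verified Lean document; each statement's English description precedes it below -/
import Mathlib

section
/- Let α,β:[0,1]→ℝⁿ be piecewise smooth loops based at a point p∈ℝⁿ. Then ∫_α dx_{i₁}⋯dx_{i_p} = ∫_β dx_{i₁}⋯dx_{i_p} for every p≥1 and all indices i₁,…,i_p∈{1,…,n} if and only if α and β are thin equivalent within the class of piecewise smooth loops based at p. In particular, the Chen signature map is a faithful representation of the group of piecewise smooth loops at p modulo thin homotopy. -/
open Set MeasureTheory intervalIntegral Topology
open scoped Manifold

noncomputable section

namespace ChenPaper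

/-- A strictly increasing partition `0 = s 0 < s 1 < ⋯ < s k = 1` of `[0,1]`. -/
def IsPartition {k : ℕ} (s : Fin (k + 1) → ℝ) : Prop :=
  s 0 = 0 ∧ s (Fin.last k) = 1 ∧ StrictMono s

variable {E : Type*} [NormedAddCommGroup E] [NormedSpace ℝ E]

/-- A path `γ : [0,1] → E` is piecewise smooth if there is a partition of `[0,1]`
on whose closed subintervals `γ` is `C^∞`. -/
def PiecewiseSmooth (γ : ℝ → E) : Prop :=
  ∃ (k : ℕ) (s : Fin (k + 1) → ℝ), IsPartition s ∧
    ∀ j : Fin k, ContDiffOn ℝ (⊤ : ℕ∞) γ (Icc (s j.castSucc) (s j.succ))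

/-- A path is piecewise smoothly immersed if it is constant, or piecewise `C^∞`
with nowhere-vanishing (one-sided) derivative on each piece. -/
def PiecewiseSmoothImmersed (γ : ℝ → E) : Prop :=
  (∀ t ∈ Icc (0:ℝ) 1, γ t = γ 0) ∨
  ∃ (k : ℕ) (s : Fin (k + 1) → ℝ), IsPartition s ∧
    ∀ j : Fin k, ContDiffOn ℝ (⊤ : ℕ∞) γ (Icc (s j.castSucc) (s j.succ)) ∧
      ∀ t ∈ Icc (s j.castSucc) (s j.succ),
        derivWithin γ (Icc (s j.castSucc) (s j.succ)) t ≠ 0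

/-- Concatenation of paths. -/
def pconcat {X : Type*} (a b : ℝ → X) : ℝ → X :=
  fun t => if t ≤ 1 / 2 then a (2 * t) else b (2 * t - 1)

/-- Reversal of a path. -/
def pinv {X : Type*} (a : ℝ → X) : ℝ → X := fun t => a (1 - t)

/-- Orientation-preserving piecewise smooth reparametrization. -/
def Reparam {X : Type*} (α β : ℝ → X) : Prop :=
  ∃ σ : ℝ → ℝ, PiecewiseSmooth σ ∧ σ 0 = 0 ∧ σ 1 = 1 ∧
    StrictMonoOn σ (Icc 0 1) ∧ MapsTo σ (Icc 0 1) (Icc 0 1) ∧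
    (∃ τ : ℝ → ℝ, PiecewiseSmooth τ ∧ ∀ t ∈ Icc (0:ℝ) 1, τ (σ t) = t) ∧
    ∀ t ∈ Icc (0:ℝ) 1, β t = α (σ t)

/-- One step of the retrace relation, relative to a class `C` of paths:
either a reparametrization, or cancelling a retracing `a · a⁻¹` inserted
between `α` and `β`. -/
def RetraceBase {X : Type*} (C : (ℝ → X) → Prop) (γ₁ γ₂ : ℝ → X) : Prop :=
  Reparam γ₁ γ₂ ∨
  ∃ α β a : ℝ → X, C α ∧ C β ∧ C a ∧ a 0 = α 1 ∧ β 0 = α 1 ∧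
    (∀ t ∈ Icc (0:ℝ) 1, γ₁ t = pconcat α (pconcat (pconcat a (pinv a)) β) t) ∧
    (∀ t ∈ Icc (0:ℝ) 1, γ₂ t = pconcat α β t)

/-- The retrace relation: the equivalence relation generated by `RetraceBase C`. -/
def RetraceEquiv {X : Type*} (C : (ℝ → X) → Prop) : (ℝ → X) → (ℝ → X) → Prop :=
  Relation.EqvGen (RetraceBase C)

/-- `η` is a thin homotopy (rel endpoints) from the loop `α` to the loop `β`, based at `p`. -/
def IsThinHomotopy {X : Type*} [TopologicalSpace X] (p : X) (α β : ℝ → X)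
    (η : ℝ × ℝ → X) : Prop :=
  ContinuousOn η (Icc 0 1 ×ˢ Icc 0 1) ∧
  (∀ t ∈ Icc (0:ℝ) 1, η (0, t) = α t) ∧
  (∀ t ∈ Icc (0:ℝ) 1, η (1, t) = β t) ∧
  (∀ s ∈ Icc (0:ℝ) 1, η (s, 0) = p ∧ η (s, 1) = p) ∧
  η '' (Icc 0 1 ×ˢ Icc 0 1) ⊆ α '' Icc 0 1 ∪ β '' Icc 0 1

/-- Thin equivalence within the class `C` of loops based at `p`: the equivalence
relation on `C` generated by existence of a thin homotopy. -/
def ThinEquiv {X : Type*} [TopologicalSpace X] (C : (ℝ → X) → Prop) (p : X) :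
    (ℝ → X) → (ℝ → X) → Prop :=
  Relation.EqvGen (fun α β => C α ∧ C β ∧ ∃ η, IsThinHomotopy p α β η)

variable {n : ℕ}

/-- The `i`-th coordinate derivative of a path in `ℝⁿ` (junk value where not differentiable;
for a piecewise smooth path this is the honest derivative off the partition points). -/
def pathDeriv (γ : ℝ → (Fin n → ℝ)) (i : Fin n) : ℝ → ℝ :=
  fun t => deriv (fun u => γ u i) t

/-- `chenS γ [i_p, …, i_1] t` is the iterated integral
`∫_{0 ≤ t₁ ≤ ⋯ ≤ t_p ≤ t} γ'_{i₁}(t₁) ⋯ γ'_{i_p}(t_p)`; note the reversed index list. -/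
def chenS (γ : ℝ → (Fin n → ℝ)) : List (Fin n) → ℝ → ℝ
  | [], _ => 1
  | i :: is, t => ∫ s in (0:ℝ)..t, chenS γ is s * pathDeriv γ i s

/-- `S_t(i₁,…,i_p)`: the elementary iterated integral over `{0 ≤ t₁ ≤ ⋯ ≤ t_p ≤ t}`,
with the index list in natural order `[i₁, …, i_p]`. -/
def sigPartial (γ : ℝ → (Fin n → ℝ)) (l : List (Fin n)) (t : ℝ) : ℝ :=
  chenS γ l.reverse t

/-- The elementary iterated integral `∫_γ dx_{i₁} ⋯ dx_{i_p}` for `l = [i₁, …, i_p]`. -/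
def elemIterInt (γ : ℝ → (Fin n → ℝ)) (l : List (Fin n)) : ℝ :=
  chenS γ l.reverse 1


/-- Working regularity class: continuous, differentiable off a countable set with
derivative bounded by `V`. -/
def Nice (γ : ℝ → Fin n → ℝ) (V : ℝ) : Prop :=
  0 ≤ V ∧ ContinuousOn γ (Icc 0 1) ∧ ∃ S : Set ℝ, S.Countable ∧
    ∀ t ∈ Ioo (0:ℝ) 1 \ S, ∀ i, HasDerivAt (fun u => γ u i) (pathDeriv γ i t) t ∧
      |pathDeriv γ i t| ≤ V

lemma Nice.mono {γ : ℝ → Fin n → ℝ} {V W : ℝ} (h : Nice γ V) (hVW : V ≤ W) : Nice γ W := by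
  obtain ⟨h0, hc, S, hS, h⟩ := h
  exact ⟨h0.trans hVW, hc, S, hS, fun t ht i => ⟨(h t ht i).1, (h t ht i).2.trans hVW⟩⟩

lemma partition_cover {k : ℕ} {s : Fin (k + 1) → ℝ} (hs : IsPartition s) {t : ℝ}
    (ht : t ∈ Icc (0:ℝ) 1) : ∃ j : Fin k, t ∈ Icc (s j.castSucc) (s j.succ) := by
  obtain ⟨h0, h1, hm⟩ := hs
  have key : ∀ m : Fin (k + 1), t ≤ s m → t = s 0 ∨
      ∃ j : Fin k, t ∈ Icc (s j.castSucc) (s j.succ) := by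
    intro m
    induction m using Fin.induction with
    | zero => intro h; left; exact le_antisymm h (h0 ▸ ht.1)
    | succ j ih =>
      intro h
      by_cases h' : t ≤ s j.castSucc
      · exact ih h'
      · right; exact ⟨j, (not_le.1 h').le, h⟩
  rcases key (Fin.last k) (h1 ▸ ht.2) with h | h
  · cases k with
    | zero =>
      exfalso
      have : s 0 = s (Fin.last 0) := rfl
      rw [h0, h1] at this; norm_num at this
    | succ k =>
      refine ⟨0, ?_, ?_⟩
      · rw [h]; exact le_of_eq rfl
      · rw [h]; exact (hm (by simp)).le
  · exact h

lemma nice_of_piecewiseSmooth {γ : ℝ → Fin n → ℝ} (h : PiecewiseSmooth γ) : ∃ V, Nice γ V := by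
  obtain ⟨k, s, hs, hγ⟩ := h
  have hlt : ∀ j : Fin k, s j.castSucc < s j.succ := fun j => hs.2.2 (Fin.castSucc_lt_succ)
  have hbd : ∀ j : Fin k, ∃ V, 0 ≤ V ∧ ∀ t ∈ Ioo (s j.castSucc) (s j.succ), ∀ i,
      HasDerivAt (fun u => γ u i) (pathDeriv γ i t) t ∧ |pathDeriv γ i t| ≤ V := by
    intro j
    have hu := uniqueDiffOn_Icc (hlt j)
    have hcont := (hγ j).continuousOn_derivWithin hu (by simp)
    obtain ⟨V, hV⟩ := isCompact_Icc.exists_bound_of_continuousOn hcont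
    refine ⟨max V 0, le_max_right _ _, fun t ht i => ?_⟩
    have hmem : Icc (s j.castSucc) (s j.succ) ∈ 𝓝 t := Icc_mem_nhds ht.1 ht.2
    have hd : DifferentiableAt ℝ γ t :=
      ((hγ j).differentiableOn (by simp) t (Ioo_subset_Icc_self ht)).differentiableAt hmem
    have hd2 : HasDerivAt (fun u => γ u i) (deriv γ t i) t := hasDerivAt_pi.1 hd.hasDerivAt i
    have he : pathDeriv γ i t = deriv γ t i := hd2.deriv
    rw [he]
    refine ⟨hd2, ?_⟩
    have h1 := hV t (Ioo_subset_Icc_self ht)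
    rw [derivWithin_of_mem_nhds hmem] at h1
    exact ((norm_le_pi_norm (deriv γ t) i).trans h1).trans (le_max_left _ _)
  choose V hV0 hV using hbd
  refine ⟨∑ j, V j, Finset.sum_nonneg fun j _ => hV0 j, ?_, range s, (finite_range s).countable, ?_⟩
  · have h1 : ContinuousOn γ (⋃ j : Fin k, Icc (s j.castSucc) (s j.succ)) :=
      (locallyFinite_of_finite _).continuousOn_iUnion (fun j => isClosed_Icc)
        (fun j => (hγ j).continuousOn)
    refine h1.mono fun t ht => ?_
    obtain ⟨j, hj⟩ := partition_cover hs ht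
    exact mem_iUnion.2 ⟨j, hj⟩
  · intro t ht i
    obtain ⟨j, hj⟩ := partition_cover hs (Ioo_subset_Icc_self ht.1)
    have h1 : t ∈ Ioo (s j.castSucc) (s j.succ) := by
      refine ⟨lt_of_le_of_ne hj.1 ?_, lt_of_le_of_ne hj.2 ?_⟩
      · rintro rfl; exact ht.2 ⟨_, rfl⟩
      · rintro rfl; exact ht.2 ⟨_, rfl⟩
    exact ⟨(hV j t h1 i).1, (hV j t h1 i).2.trans
      (Finset.single_le_sum (f := V) (fun j _ => hV0 j) (Finset.mem_univ j))⟩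

lemma Nice.ae_bound {γ : ℝ → Fin n → ℝ} {V : ℝ} (h : Nice γ V) (i : Fin n) :
    ∀ᵐ t ∂(volume.restrict (Icc (0:ℝ) 1)),
      HasDerivAt (fun u => γ u i) (pathDeriv γ i t) t ∧ |pathDeriv γ i t| ≤ V := by
  obtain ⟨h0, hc, S, hS, h⟩ := h
  rw [ae_restrict_iff' measurableSet_Icc]
  have hS' : (S ∪ {0, 1}).Countable := hS.union (by simp)
  filter_upwards [hS'.ae_notMem volume] with t ht ht1
  simp only [mem_union, mem_insert_iff, mem_singleton_iff, not_or] at ht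
  exact h t ⟨⟨lt_of_le_of_ne ht1.1 (Ne.symm ht.2.1), lt_of_le_of_ne ht1.2 ht.2.2⟩, ht.1⟩ i

lemma measurable_pathDeriv (γ : ℝ → Fin n → ℝ) (i : Fin n) : Measurable (pathDeriv γ i) :=
  measurable_deriv _

lemma Nice.integrableOn {γ : ℝ → Fin n → ℝ} {V : ℝ} (h : Nice γ V) (i : Fin n) :
    IntegrableOn (pathDeriv γ i) (Icc 0 1) := by
  refine Measure.integrableOn_of_bounded (M := V) (by simp)
    (measurable_pathDeriv γ i).aestronglyMeasurable ?_
  filter_upwards [h.ae_bound i] with t ht using ht.2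

/-- Integrability of a continuous function against the derivative. -/
lemma Nice.ii {γ : ℝ → Fin n → ℝ} {V : ℝ} (h : Nice γ V) (i : Fin n) {f : ℝ → ℝ}
    (hf : ContinuousOn f (Icc 0 1)) {a b : ℝ} (ha : a ∈ Icc (0:ℝ) 1) (hb : b ∈ Icc (0:ℝ) 1) :
    IntervalIntegrable (fun s => f s * pathDeriv γ i s) volume a b := by
  have h1 : IntervalIntegrable (pathDeriv γ i) volume a b := by
    refine IntegrableOn.intervalIntegrable ((h.integrableOn i).mono_set ?_)
    exact uIcc_subset_Icc ha hb
  exact h1.continuousOn_mul (hf.mono (uIcc_subset_Icc ha hb))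

lemma Nice.bound {γ : ℝ → Fin n → ℝ} {V : ℝ} (h : Nice γ V) (i : Fin n) {f : ℝ → ℝ} {M : ℝ}
    {a b : ℝ} (ha : a ∈ Icc (0:ℝ) 1) (hb : b ∈ Icc (0:ℝ) 1)
    (hM : ∀ s ∈ uIcc a b, |f s| ≤ M) :
    |∫ s in a..b, f s * pathDeriv γ i s| ≤ M * V * |b - a| := by
  rw [← Real.norm_eq_abs]
  refine intervalIntegral.norm_integral_le_of_norm_le_const_ae ?_
  have := h.ae_bound i
  rw [ae_restrict_iff' measurableSet_Icc] at this
  filter_upwards [this] with t ht ht1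
  have h2 : t ∈ uIcc a b := uIoc_subset_uIcc ht1
  rw [norm_mul]
  exact mul_le_mul (hM t h2) (ht (uIcc_subset_Icc ha hb h2)).2 (norm_nonneg _)
    ((abs_nonneg _).trans (hM t h2))

lemma Nice.ftc {γ : ℝ → Fin n → ℝ} {V : ℝ} (h : Nice γ V) (i : Fin n) {φ f : ℝ → ℝ}
    (hφ : ∀ x, HasDerivAt φ (f x) x) (hf : Continuous f)
    {a b : ℝ} (ha : a ∈ Icc (0:ℝ) 1) (hb : b ∈ Icc (0:ℝ) 1) :
    ∫ s in a..b, f (γ s i) * pathDeriv γ i s = φ (γ b i) - φ (γ a i) := by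
  have hc : ContinuousOn (fun s => γ s i) (Icc 0 1) := continuousOn_pi.1 h.2.1 i
  have hsub := uIcc_subset_Icc ha hb
  obtain ⟨S, hS, hd⟩ := h.2.2
  have hφc : Continuous φ := continuous_iff_continuousAt.2 fun x => (hφ x).continuousAt
  refine integral_eq_of_hasDerivAt_off_countable (fun s => φ (γ s i)) _ hS
    (hφc.comp_continuousOn (hc.mono hsub)) ?_ (h.ii i (hf.comp_continuousOn hc) ha hb)
  intro x hx
  have hx1 : x ∈ Ioo (0:ℝ) 1 :=
    ⟨lt_of_le_of_lt (le_min ha.1 hb.1) hx.1.1, lt_of_lt_of_le hx.1.2 (max_le ha.2 hb.2)⟩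
  exact (hφ (γ x i)).comp x (hd x ⟨hx1, hx.2⟩ i).1

lemma Nice.lip {γ : ℝ → Fin n → ℝ} {V : ℝ} (h : Nice γ V) (i : Fin n)
    {a b : ℝ} (ha : a ∈ Icc (0:ℝ) 1) (hb : b ∈ Icc (0:ℝ) 1) :
    |γ b i - γ a i| ≤ V * |b - a| := by
  have h1 := h.ftc i (φ := fun x => x) (f := fun _ => 1) (fun x => hasDerivAt_id x)
    continuous_const ha hb
  rw [← h1]
  simpa using h.bound i (f := fun _ => 1) (M := 1) ha hb (by simp)

/-! ### Signature lifts -/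

lemma Nice.primitive_cont {γ : ℝ → Fin n → ℝ} {V : ℝ} (h : Nice γ V) (i : Fin n) {f : ℝ → ℝ}
    (hf : ContinuousOn f (Icc 0 1)) :
    ContinuousOn (fun t => ∫ s in (0:ℝ)..t, f s * pathDeriv γ i s) (Icc 0 1) := by
  have h1 := intervalIntegral.continuousOn_primitive_interval'
    (h.ii i hf (a := 0) (b := 1) (by simp) (by simp)) (a := 0) (by simp)
  rwa [uIcc_of_le zero_le_one] at h1

lemma Nice.primitive_sub {γ : ℝ → Fin n → ℝ} {V : ℝ} (h : Nice γ V) (i : Fin n) {f : ℝ → ℝ}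
    (hf : ContinuousOn f (Icc 0 1)) {s t : ℝ} (hs : s ∈ Icc (0:ℝ) 1) (ht : t ∈ Icc (0:ℝ) 1) :
    (∫ u in (0:ℝ)..t, f u * pathDeriv γ i u) - (∫ u in (0:ℝ)..s, f u * pathDeriv γ i u)
      = ∫ u in s..t, f u * pathDeriv γ i u :=
  intervalIntegral.integral_interval_sub_left (h.ii i hf (by simp) ht) (h.ii i hf (by simp) hs)

lemma chenS_cont {γ : ℝ → Fin n → ℝ} {V : ℝ} (h : Nice γ V) (w : List (Fin n)) :
    ContinuousOn (chenS γ w) (Icc 0 1) := by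
  induction w with
  | nil => exact continuousOn_const
  | cons i w ih => exact h.primitive_cont i ih

lemma chenS_bound {γ : ℝ → Fin n → ℝ} {V : ℝ} (h : Nice γ V) (w : List (Fin n)) :
    ∀ t ∈ Icc (0:ℝ) 1, |chenS γ w t| ≤ V ^ w.length := by
  induction w with
  | nil => intro t _; simp [chenS]
  | cons i w ih =>
    intro t ht
    have h0 : (0:ℝ) ∈ Icc (0:ℝ) 1 := by simp
    have h1 := h.bound i (f := chenS γ w) (M := V ^ w.length) h0 ht
      (fun s hs => ih s (uIcc_subset_Icc h0 ht hs))
    have h2 : |t - 0| ≤ 1 := by rw [sub_zero, abs_of_nonneg ht.1]; exact ht.2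
    have h3 : 0 ≤ V := h.1
    calc |chenS γ (i :: w) t| ≤ V ^ w.length * V * |t - 0| := h1
      _ ≤ V ^ w.length * V * 1 := by gcongr
      _ = V ^ (i :: w).length := by simp [pow_succ]

/-- `y` can be reached from `x` by a horizontal move of size `r`. -/
def Hrel (V : ℝ) (x y : List (Fin n) → ℝ) (r : ℝ) : Prop :=
  (∀ w, |y w - x w| ≤ V ^ w.length * r) ∧
  ∀ i w, |y (i :: w) - x (i :: w) - x w * (y [i] - x [i])| ≤ V ^ (w.length + 1) * r ^ 2

/-- The signature lift of a path. -/
def lift (γ : ℝ → Fin n → ℝ) (t : ℝ) : List (Fin n) → ℝ := fun w => chenS γ w t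

lemma lift_single {γ : ℝ → Fin n → ℝ} {V : ℝ} (h : Nice γ V) (i : Fin n) {t : ℝ}
    (ht : t ∈ Icc (0:ℝ) 1) : lift γ t [i] = γ t i - γ 0 i := by
  have h1 := h.ftc i (φ := fun x => x) (f := fun _ => 1) (fun x => hasDerivAt_id x)
    continuous_const (a := 0) (by simp) ht
  simpa [lift, chenS] using h1

lemma lift_lip {γ : ℝ → Fin n → ℝ} {V : ℝ} (h : Nice γ V) {s t : ℝ}
    (hs : s ∈ Icc (0:ℝ) 1) (ht : t ∈ Icc (0:ℝ) 1) (w : List (Fin n)) :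
    |lift γ t w - lift γ s w| ≤ V ^ w.length * |s - t| := by
  cases w with
  | nil => simp [lift, chenS]
  | cons i w =>
    simp only [lift, chenS]
    rw [h.primitive_sub i (chenS_cont h w) hs ht, abs_sub_comm s t, List.length_cons, pow_succ]
    exact h.bound i hs ht (fun u hu => chenS_bound h w u (uIcc_subset_Icc hs ht hu))

lemma lift_hrel {γ : ℝ → Fin n → ℝ} {V : ℝ} (h : Nice γ V) {s t : ℝ}
    (hs : s ∈ Icc (0:ℝ) 1) (ht : t ∈ Icc (0:ℝ) 1) :
    Hrel V (lift γ s) (lift γ t) |s - t| := by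
  refine ⟨lift_lip h hs ht, fun i w => ?_⟩
  have hc := chenS_cont h w
  have e1 : lift γ t [i] - lift γ s [i] = ∫ u in s..t, 1 * pathDeriv γ i u := by
    simp only [lift, chenS]
    exact h.primitive_sub i continuousOn_const hs ht
  have e2 : lift γ t (i :: w) - lift γ s (i :: w) = ∫ u in s..t, chenS γ w u * pathDeriv γ i u := by
    simp only [lift, chenS]
    exact h.primitive_sub i hc hs ht
  have e3 : lift γ t (i :: w) - lift γ s (i :: w) - lift γ s w * (lift γ t [i] - lift γ s [i])
      = ∫ u in s..t, (chenS γ w u - chenS γ w s) * pathDeriv γ i u := by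
    rw [e1, e2, ← intervalIntegral.integral_const_mul, ← intervalIntegral.integral_sub
      (h.ii i hc hs ht) ((h.ii i continuousOn_const hs ht).const_mul _)]
    refine intervalIntegral.integral_congr fun u _ => ?_
    simp only [lift]; ring
  rw [e3]
  have h0 := h.1
  have := h.bound i (f := fun u => chenS γ w u - chenS γ w s) (M := V ^ w.length * |s - t|) hs ht
    (fun u hu => by
      have h2 := lift_lip h hs (uIcc_subset_Icc hs ht hu) w
      refine h2.trans ?_
      have h3 : |s - u| ≤ |s - t| := by
        rw [abs_sub_comm s u, abs_sub_comm s t]; exact abs_sub_left_of_mem_uIcc hu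
      gcongr)
  refine this.trans (le_of_eq ?_)
  rw [abs_sub_comm t s, pow_succ]; ring

lemma Hrel.trans {V : ℝ} (hV : 0 ≤ V) {x y z : List (Fin n) → ℝ} {r q : ℝ}
    (h1 : Hrel V x y r) (h2 : Hrel V y z q) (hr : 0 ≤ r) (hq : 0 ≤ q) : Hrel V x z (r + q) := by
  refine ⟨fun w => ?_, fun i w => ?_⟩
  · have e : z w - x w = (y w - x w) + (z w - y w) := by ring
    rw [e, mul_add]
    exact (abs_add_le _ _).trans (add_le_add (h1.1 w) (h2.1 w))
  · have e : z (i :: w) - x (i :: w) - x w * (z [i] - x [i]) =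
      (y (i :: w) - x (i :: w) - x w * (y [i] - x [i])) +
      (z (i :: w) - y (i :: w) - y w * (z [i] - y [i])) + (y w - x w) * (z [i] - y [i]) := by ring
    rw [e]
    have a1 := h1.2 i w
    have a2 := h2.2 i w
    have a3 : |(y w - x w) * (z [i] - y [i])| ≤ (V ^ w.length * r) * (V * q) := by
      rw [abs_mul]
      have := h2.1 [i]
      simp only [List.length_singleton, pow_one] at this
      exact mul_le_mul (h1.1 w) this (abs_nonneg _) (by positivity)
    have a4 : 0 ≤ V ^ (w.length + 1) * (r * q) := by positivity
    refine (abs_add_le _ _).trans ((add_le_add ((abs_add_le _ _).trans (add_le_add a1 a2)) a3).trans ?_)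
    rw [pow_succ] at *
    nlinarith

/-- Mean value inequality from a quadratic remainder. -/
lemma mean_value {h : ℝ → ℝ} {a b M C : ℝ} (hab : a ≤ b) 
    (H : ∀ s ∈ Icc a b, ∀ t ∈ Icc a b, s ≤ t → |h t - h s| ≤ M * (t - s) + C * (t - s) ^ 2) :
    |h b - h a| ≤ M * (b - a) := by
  have key : ∀ N : ℕ, |h b - h a| ≤ M * (b - a) + C * (b - a) ^ 2 * (1 / ((N : ℝ) + 1)) := by
    intro N
    have hN : (0:ℝ) < (N : ℝ) + 1 := by positivity
    set d : ℝ := (b - a) / (N + 1) with hd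
    have hd0 : 0 ≤ d := div_nonneg (sub_nonneg.2 hab) hN.le
    have hdN : ((N : ℝ) + 1) * d = b - a := by rw [hd]; field_simp
    have ind : ∀ m : ℕ, m ≤ N + 1 → |h (a + m * d) - h a| ≤ m * (M * d + C * d ^ 2) := by
      intro m
      induction m with
      | zero => intro _; simp
      | succ m ih =>
        intro hm
        have hm' : (m : ℝ) + 1 ≤ N + 1 := by exact_mod_cast hm
        have b1 : ((m:ℝ) + 1) * d ≤ b - a := by
          rw [← hdN]; exact mul_le_mul_of_nonneg_right hm' hd0
        have b2 : 0 ≤ (m : ℝ) * d := by positivity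
        have i1 := ih (by omega)
        have i2 := H (a + m * d) ⟨by linarith, by linarith⟩ (a + ((m + 1 : ℕ) : ℝ) * d)
          ⟨by push_cast; linarith, by push_cast; linarith⟩ (by push_cast; linarith)
        have e : a + ((m + 1 : ℕ) : ℝ) * d - (a + m * d) = d := by push_cast; ring
        rw [e] at i2
        have e2 : h (a + ((m + 1 : ℕ) : ℝ) * d) - h a = (h (a + ((m + 1 : ℕ) : ℝ) * d) - h (a + m * d))
          + (h (a + m * d) - h a) := by ring
        rw [e2]
        refine (abs_add_le _ _).trans ((add_le_add i2 i1).trans (le_of_eq ?_))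
        push_cast; ring
    have := ind (N + 1) le_rfl
    have e : a + ((N + 1 : ℕ) : ℝ) * d = b := by push_cast; linarith
    rw [e] at this
    refine this.trans (le_of_eq ?_)
    rw [← hdN]; push_cast; field_simp
  have lim : Filter.Tendsto (fun N : ℕ => M * (b - a) + C * (b - a) ^ 2 * (1 / ((N : ℝ) + 1)))
      Filter.atTop (𝓝 (M * (b - a) + C * (b - a) ^ 2 * 0)) :=
    (tendsto_one_div_add_atTop_nhds_zero_nat.const_mul _).const_add _
  have := ge_of_tendsto' lim key
  simpa using this

/-- Pairing of a word polynomial with a point. -/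
def ev (P : List (Fin n) →₀ ℝ) (x : List (Fin n) → ℝ) : ℝ := Finsupp.linearCombination ℝ x P

lemma ev_add (P Q : List (Fin n) →₀ ℝ) (x : List (Fin n) → ℝ) :
    ev (P + Q) x = ev P x + ev Q x := by simp [ev]

lemma ev_smul (c : ℝ) (P : List (Fin n) →₀ ℝ) (x : List (Fin n) → ℝ) :
    ev (c • P) x = c * ev P x := by simp [ev]

lemma ev_single (w : List (Fin n)) (c : ℝ) (x : List (Fin n) → ℝ) :
    ev (Finsupp.single w c) x = c * x w := by simp [ev]

/-- Append a letter: the "integral" of `P` against `dx_i`. -/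
def prim (i : Fin n) (P : List (Fin n) →₀ ℝ) : List (Fin n) →₀ ℝ :=
  Finsupp.mapDomain (fun w => i :: w) P

lemma ev_prim_err {V : ℝ} (hV : 0 ≤ V) (i : Fin n) (P : List (Fin n) →₀ ℝ) :
    ∃ C, 0 ≤ C ∧ ∀ (x y : List (Fin n) → ℝ) (r : ℝ), Hrel V x y r →
      |ev (prim i P) y - ev (prim i P) x - ev P x * (y [i] - x [i])| ≤ C * r ^ 2 := by
  induction P using Finsupp.induction_linear with
  | zero => exact ⟨0, le_rfl, fun x y r _ => by simp [prim, ev]⟩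
  | add P Q hP hQ =>
    obtain ⟨C, hC, h1⟩ := hP
    obtain ⟨D, hD, h2⟩ := hQ
    refine ⟨C + D, by positivity, fun x y r h => ?_⟩
    have a1 := h1 x y r h
    have a2 := h2 x y r h
    have e : ∀ z, ev (prim i (P + Q)) z = ev (prim i P) z + ev (prim i Q) z := by
      intro z; rw [prim, Finsupp.mapDomain_add, ev_add]; rfl
    rw [e, e, ev_add]
    have e2 : ev (prim i P) y + ev (prim i Q) y - (ev (prim i P) x + ev (prim i Q) x)
        - (ev P x + ev Q x) * (y [i] - x [i]) =
        (ev (prim i P) y - ev (prim i P) x - ev P x * (y [i] - x [i])) +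
        (ev (prim i Q) y - ev (prim i Q) x - ev Q x * (y [i] - x [i])) := by ring
    rw [e2, add_mul]
    exact (abs_add_le _ _).trans (add_le_add a1 a2)
  | single w c =>
    refine ⟨|c| * V ^ (w.length + 1), by positivity, fun x y r h => ?_⟩
    have := h.2 i w
    rw [prim, Finsupp.mapDomain_single, ev_single, ev_single, ev_single]
    have e : c * y (i :: w) - c * x (i :: w) - c * x w * (y [i] - x [i]) =
      c * (y (i :: w) - x (i :: w) - x w * (y [i] - x [i])) := by ring
    rw [e, abs_mul, mul_assoc]
    gcongr

/-- Shuffle product: products of coordinates are linear in the coordinates. -/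
lemma shuffle (w v : List (Fin n)) : ∃ P : List (Fin n) →₀ ℝ, ∀ (γ : ℝ → Fin n → ℝ) (V : ℝ),
    Nice γ V → ∀ t ∈ Icc (0:ℝ) 1, lift γ t w * lift γ t v = ev P (lift γ t) := by
  induction w generalizing v with
  | nil => exact ⟨Finsupp.single v 1, fun γ V h t ht => by simp [ev_single, lift, chenS]⟩
  | cons i w ihw =>
    induction v with
    | nil =>
      exact ⟨Finsupp.single (i :: w) 1, fun γ V h t ht => by
        rw [ev_single]; simp [lift, chenS]⟩
    | cons j v ihv =>
      obtain ⟨P, hP⟩ := ihw (j :: v)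
      obtain ⟨Q, hQ⟩ := ihv
      refine ⟨prim i P + prim j Q, fun γ V h => ?_⟩
      obtain ⟨C1, hC1, h1⟩ := ev_prim_err h.1 i P
      obtain ⟨C2, hC2, h2⟩ := ev_prim_err h.1 j Q
      set F : ℝ → ℝ := fun t => lift γ t (i :: w) * lift γ t (j :: v)
        - (ev (prim i P) (lift γ t) + ev (prim j Q) (lift γ t)) with hF
      have hV := h.1
      have step : ∀ s ∈ Icc (0:ℝ) 1, ∀ t ∈ Icc (0:ℝ) 1, s ≤ t → |F t - F s| ≤ 0 * (t - s) +
          (V ^ (w.length + 1) * V ^ (v.length + 1) + V ^ (w.length + 1) * V ^ (v.length + 1) +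
          V ^ (w.length + 1) * V ^ (v.length + 1) + C1 + C2) * (t - s) ^ 2 := by
        intro s hs t ht hst
        have hr := lift_hrel h hs ht
        have e1 := hr.2 i w
        have e2 := hr.2 j v
        have e3 := h1 _ _ _ hr
        have e4 := h2 _ _ _ hr
        have e5 := hr.1 (i :: w)
        have e6 := hr.1 (j :: v)
        have b1 := chenS_bound h (i :: w) s hs
        have b2 := chenS_bound h (j :: v) s hs
        change |lift γ s (i :: w)| ≤ _ at b1
        change |lift γ s (j :: v)| ≤ _ at b2
        rw [← hP γ V h s hs] at e3
        rw [← hQ γ V h s hs] at e4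
        have hr2 : |s - t| ^ 2 = (t - s) ^ 2 := by rw [sq_abs]; ring
        rw [hr2] at e1 e2 e3 e4
        simp only [List.length_cons] at e5 e6 b1 b2
        simp only [hF]
        generalize lift γ s = x at *
        generalize lift γ t = y at *
        have key : y (i :: w) * y (j :: v) - (ev (prim i P) y + ev (prim j Q) y) -
            (x (i :: w) * x (j :: v) - (ev (prim i P) x + ev (prim j Q) x)) =
            (y (i :: w) - x (i :: w) - x w * (y [i] - x [i])) * x (j :: v) +
            x (i :: w) * (y (j :: v) - x (j :: v) - x v * (y [j] - x [j])) +
            (y (i :: w) - x (i :: w)) * (y (j :: v) - x (j :: v)) -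
            (ev (prim i P) y - ev (prim i P) x - x w * x (j :: v) * (y [i] - x [i])) -
            (ev (prim j Q) y - ev (prim j Q) x - x (i :: w) * x v * (y [j] - x [j])) := by ring
        rw [key]
        have m1 : |(y (i :: w) - x (i :: w) - x w * (y [i] - x [i])) * x (j :: v)| ≤
            (V ^ (w.length + 1) * (t - s) ^ 2) * V ^ (v.length + 1) := by
          rw [abs_mul]; gcongr
        have m2 : |x (i :: w) * (y (j :: v) - x (j :: v) - x v * (y [j] - x [j]))| ≤
            V ^ (w.length + 1) * (V ^ (v.length + 1) * (t - s) ^ 2) := by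
          rw [abs_mul]; gcongr
        have m3 : |(y (i :: w) - x (i :: w)) * (y (j :: v) - x (j :: v))| ≤
            (V ^ (w.length + 1) * |s - t|) * (V ^ (v.length + 1) * |s - t|) := by
          rw [abs_mul]; gcongr
        have m3' : (V ^ (w.length + 1) * |s - t|) * (V ^ (v.length + 1) * |s - t|) =
          V ^ (w.length + 1) * V ^ (v.length + 1) * (t - s) ^ 2 := by rw [← hr2]; ring
        rw [m3'] at m3
        refine (abs_sub _ _).trans ((add_le_add ((abs_sub _ _).trans (add_le_add
          ((abs_add_le _ _).trans (add_le_add ((abs_add_le _ _).trans (add_le_add m1 m2)) m3)) e3))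
          e4).trans (le_of_eq ?_))
        ring
      intro t ht
      have hz := mean_value (h := F) ht.1
        (fun s hs u hu => step s ⟨hs.1, hs.2.trans ht.2⟩ u ⟨hu.1, hu.2.trans ht.2⟩)
      have h0 : F 0 = 0 := by
        have hz : ∀ (l : Fin n) (R : List (Fin n) →₀ ℝ), ev (prim l R) (lift γ 0) = 0 := by
          intro l R
          induction R using Finsupp.induction_linear with
          | zero => simp [prim, ev]
          | add A B hA hB =>
            rw [prim, Finsupp.mapDomain_add, ev_add]
            change ev (prim l A) _ + ev (prim l B) _ = 0
            rw [hA, hB, add_zero]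
          | single u c =>
            rw [prim, Finsupp.mapDomain_single, ev_single]; simp [lift, chenS]
        simp only [hF, hz]
        simp [lift, chenS]
      rw [h0, zero_mul, sub_zero] at hz
      have hz2 : F t = 0 := abs_eq_zero.1 (le_antisymm hz (abs_nonneg _))
      rw [ev_add]
      simp only [hF] at hz2
      linarith

/-! ### Horizontal curves and geodesics -/

lemma Hrel.mono {V : ℝ} (hV : 0 ≤ V) {x y : List (Fin n) → ℝ} {r q : ℝ} (h : Hrel V x y r)
    (hr : 0 ≤ r) (hrq : r ≤ q) : Hrel V x y q := by
  refine ⟨fun w => (h.1 w).trans ?_, fun i w => (h.2 i w).trans ?_⟩ <;> gcongr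

/-- Horizontal unit speed curves inside `K`. -/
def Hor (K : Set (List (Fin n) → ℝ)) (V : ℝ) (c : ℝ → List (Fin n) → ℝ) : Prop :=
  (∀ t, c t ∈ K) ∧ ∀ s t, Hrel V (c s) (c t) |s - t|

section
variable {K : Set (List (Fin n) → ℝ)} {V : ℝ}

lemma Hor.comp (hV : 0 ≤ V) {c : ℝ → List (Fin n) → ℝ} (h : Hor K V c) {φ : ℝ → ℝ}
    (hφ : ∀ s t, |φ s - φ t| ≤ |s - t|) : Hor K V (fun t => c (φ t)) :=
  ⟨fun t => h.1 _, fun s t => (h.2 (φ s) (φ t)).mono hV (abs_nonneg _) (hφ s t)⟩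

lemma Hor.concat (hV : 0 ≤ V) {c₁ c₂ : ℝ → List (Fin n) → ℝ} (h₁ : Hor K V c₁) (h₂ : Hor K V c₂)
    {L : ℝ} (hL : c₁ L = c₂ 0) : Hor K V (fun t => if t ≤ L then c₁ t else c₂ (t - L)) := by
  refine ⟨fun t => ?_, fun s t => ?_⟩
  · dsimp only; split_ifs
    exacts [h₁.1 _, h₂.1 _]
  · dsimp only
    split_ifs with hs ht ht
    · exact h₁.2 s t
    · have a1 := h₁.2 s L
      have a2 := h₂.2 0 (t - L)
      rw [hL] at a1
      have := a1.trans hV a2 (abs_nonneg _) (abs_nonneg _)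
      convert this using 1
      rw [abs_of_nonpos (by linarith), abs_of_nonpos (by linarith), abs_of_nonpos (by linarith)]
      ring
    · have a1 := h₁.2 L t
      have a2 := h₂.2 (s - L) 0
      rw [hL] at a1
      have := a2.trans hV a1 (abs_nonneg _) (abs_nonneg _)
      convert this using 1
      rw [abs_of_nonneg (by linarith), abs_of_nonneg (by linarith), abs_of_nonneg (by linarith)]
      ring
    · have := h₂.2 (s - L) (t - L)
      convert this using 2
      ring

lemma Hor.lip {c : ℝ → List (Fin n) → ℝ} (h : Hor K V c) (w : List (Fin n)) (s t : ℝ) :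
    |c t w - c s w| ≤ V ^ w.length * |s - t| := (h.2 s t).1 w

lemma Hor.continuous {c : ℝ → List (Fin n) → ℝ} (h : Hor K V c) : Continuous c := by
  refine continuous_pi fun w => ?_
  rw [continuous_iff_continuousAt]
  intro t
  rw [ContinuousAt, tendsto_iff_dist_tendsto_zero]
  have lim : Filter.Tendsto (fun u => V ^ w.length * |t - u|) (𝓝 t) (𝓝 0) := by
    have : Continuous (fun u => V ^ w.length * |t - u|) := by fun_prop
    simpa using this.tendsto t
  exact squeeze_zero (fun _ => dist_nonneg) (fun u => by rw [Real.dist_eq]; exact h.lip w t u) lim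

lemma isClosed_hrel (s t r : ℝ) :
    IsClosed {c : ℝ → List (Fin n) → ℝ | Hrel V (c s) (c t) r} := by
  have e : {c : ℝ → List (Fin n) → ℝ | Hrel V (c s) (c t) r} =
    (⋂ w, {c | |c t w - c s w| ≤ V ^ w.length * r}) ∩
    (⋂ i, ⋂ w, {c | |c t (i :: w) - c s (i :: w) - c s w * (c t [i] - c s [i])|
      ≤ V ^ (w.length + 1) * r ^ 2}) := by
    ext c; simp [Hrel]
  rw [e]
  refine IsClosed.inter (isClosed_iInter fun w => ?_)
    (isClosed_iInter fun i => isClosed_iInter fun w => ?_)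
  · exact isClosed_le (by fun_prop) continuous_const
  · exact isClosed_le (by fun_prop) continuous_const

lemma isCompact_hor (hK : IsCompact K) : IsCompact {c | Hor K V c} := by
  have h1 : IsCompact (Set.pi univ (fun _ : ℝ => K)) := isCompact_univ_pi fun _ => hK
  have e : {c | Hor K V c} = Set.pi univ (fun _ : ℝ => K) ∩
      ⋂ s, ⋂ t, {c | Hrel V (c s) (c t) |s - t|} := by
    ext c; simp [Hor]
  rw [e]
  exact h1.inter_right (isClosed_iInter fun s => isClosed_iInter fun t => isClosed_hrel s t _)

lemma continuousOn_eval :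
    ContinuousOn (fun q : ℝ × (ℝ → List (Fin n) → ℝ) => q.2 q.1) (univ ×ˢ {c | Hor K V c}) := by
  refine continuousOn_pi.2 fun w => ?_
  rintro ⟨L, c⟩ ⟨-, hc⟩
  rw [ContinuousWithinAt, tendsto_iff_dist_tendsto_zero]
  have lim : Filter.Tendsto (fun q : ℝ × (ℝ → List (Fin n) → ℝ) =>
      V ^ w.length * |L - q.1| + |q.2 L w - c L w|)
      (𝓝[univ ×ˢ {c | Hor K V c}] (L, c)) (𝓝 0) := by
    have : Continuous (fun q : ℝ × (ℝ → List (Fin n) → ℝ) =>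
      V ^ w.length * |L - q.1| + |q.2 L w - c L w|) := by fun_prop
    have := this.tendsto (L, c)
    simp only [sub_self, abs_zero, mul_zero, add_zero] at this
    exact this.mono_left nhdsWithin_le_nhds
  refine squeeze_zero' (Filter.Eventually.of_forall fun _ => dist_nonneg) ?_ lim
  filter_upwards [self_mem_nhdsWithin] with q hq
  rw [Real.dist_eq]
  have h1 := Hor.lip (c := q.2) hq.2 w L q.1
  have e : q.2 q.1 w - c L w = (q.2 q.1 w - q.2 L w) + (q.2 L w - c L w) := by ring
  rw [e]
  exact (abs_add_le _ _).trans (add_le_add h1 le_rfl)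

/-- `x` and `y` are joined by a horizontal curve of length at most `L`. -/
def Conn (K : Set (List (Fin n) → ℝ)) (V : ℝ) (x y : List (Fin n) → ℝ) (L : ℝ) : Prop :=
  0 ≤ L ∧ ∃ c, Hor K V c ∧ c 0 = x ∧ c L = y

lemma Conn.symm (hV : 0 ≤ V) {x y : List (Fin n) → ℝ} {L : ℝ} (h : Conn K V x y L) :
    Conn K V y x L := by
  obtain ⟨hL, c, hc, h0, h1⟩ := h
  refine ⟨hL, fun t => c (L - t), hc.comp hV (fun s t => ?_), by simpa using h1, by simpa using h0⟩
  rw [abs_sub_comm s t]; apply le_of_eq; congr 1; ring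

lemma Conn.trans (hV : 0 ≤ V) {x y z : List (Fin n) → ℝ} {L M : ℝ} (h : Conn K V x y L)
    (h' : Conn K V y z M) : Conn K V x z (L + M) := by
  obtain ⟨hL, c, hc, h0, h1⟩ := h
  obtain ⟨hM, d, hd, k0, k1⟩ := h'
  refine ⟨add_nonneg hL hM, _, hc.concat hV hd (L := L) (h1.trans k0.symm), ?_, ?_⟩
  · simp [hL, h0]
  · by_cases hM0 : M = 0
    · subst hM0; simp [h1, ← k1, k0]
    · have : ¬ (L + M ≤ L) := by
        have := lt_of_le_of_ne hM (Ne.symm hM0); linarith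
      simp only [this, if_false]; rw [← k1]; congr 1; ring

/-- Horizontal distance. -/
def rho (K : Set (List (Fin n) → ℝ)) (V : ℝ) (x y : List (Fin n) → ℝ) : ℝ :=
  sInf {L | Conn K V x y L}

lemma rho_le {x y : List (Fin n) → ℝ} {L : ℝ} (h : Conn K V x y L) : rho K V x y ≤ L :=
  csInf_le ⟨0, fun _ h => h.1⟩ h

lemma rho_attained (hK : IsCompact K) {x y : List (Fin n) → ℝ} {L : ℝ} (h : Conn K V x y L) :
    Conn K V x y (rho K V x y) := by
  have hS : {L | Conn K V x y L} = {L | Conn K V x y L} := rfl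
  set D : Set (ℝ × (ℝ → List (Fin n) → ℝ)) := Icc 0 L ×ˢ {c | Hor K V c} with hD
  have hDc : IsCompact D := isCompact_Icc.prod (isCompact_hor hK)
  have hcl1 : ContinuousOn (fun q : ℝ × (ℝ → List (Fin n) → ℝ) => (q.2 0, q.2 q.1)) D := by
    refine ContinuousOn.prodMk (by fun_prop) ?_
    exact continuousOn_eval.mono (prod_mono (subset_univ _) subset_rfl)
  have hE : IsCompact (D ∩ (fun q : ℝ × (ℝ → List (Fin n) → ℝ) => (q.2 0, q.2 q.1)) ⁻¹' {(x, y)}) :=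
    hDc.of_isClosed_subset (hcl1.preimage_isClosed_of_isClosed hDc.isClosed isClosed_singleton)
      inter_subset_left
  obtain ⟨c, hc, h0, h1⟩ := h.2
  have hne : (D ∩ (fun q : ℝ × (ℝ → List (Fin n) → ℝ) => (q.2 0, q.2 q.1)) ⁻¹' {(x, y)}).Nonempty :=
    ⟨(L, c), ⟨⟨h.1, le_rfl⟩, hc⟩, by simp [h0, h1]⟩
  obtain ⟨m, ⟨q, hq, hqm⟩, hmin⟩ :=
    (hE.image continuous_fst).exists_isLeast (hne.image _)
  have hqc : Conn K V x y m := by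
    have := hq.2
    simp only [mem_preimage, mem_singleton_iff, Prod.mk.injEq] at this
    exact ⟨hqm ▸ hq.1.1.1, q.2, hq.1.2, this.1, hqm ▸ this.2⟩
  have : rho K V x y = m := by
    refine le_antisymm (rho_le hqc) (le_csInf ⟨m, hqc⟩ fun M hM => ?_)
    by_cases hML : M ≤ L
    · obtain ⟨d, hd, d0, d1⟩ := hM.2
      exact hmin ⟨(M, d), ⟨⟨⟨hM.1, hML⟩, hd⟩, by simp [d0, d1]⟩, rfl⟩
    · have : m ≤ L := hmin ⟨(L, c), ⟨⟨⟨h.1, le_rfl⟩, hc⟩, by simp [h0, h1]⟩, rfl⟩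
      linarith [not_le.1 hML]
  rw [this]; exact hqc

lemma continuous_ev (P : List (Fin n) →₀ ℝ) : Continuous (ev P) := by
  unfold ev
  simp only [Finsupp.linearCombination_apply, Finsupp.sum]
  fun_prop

/-- Density of word polynomials in continuous functions on `K`. -/
lemma ev_dense (hK : IsCompact K) (hnil : ∀ x ∈ K, x [] = 1)
    (hsh : ∀ w v, ∃ P, ∀ x ∈ K, x w * x v = ev P x)
    (f : (List (Fin n) → ℝ) → ℝ) (hf : Continuous f) {ε : ℝ} (hε : 0 < ε) :
    ∃ P, ∀ x ∈ K, |ev P x - f x| < ε := by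
  have hmul : ∀ P Q : List (Fin n) →₀ ℝ, ∃ R, ∀ x ∈ K, ev P x * ev Q x = ev R x := by
    intro P Q
    induction P using Finsupp.induction_linear with
    | zero => exact ⟨0, fun x _ => by simp [ev]⟩
    | add A B hA hB =>
      obtain ⟨R, hR⟩ := hA
      obtain ⟨T, hT⟩ := hB
      exact ⟨R + T, fun x hx => by rw [ev_add, ev_add, add_mul, hR x hx, hT x hx]⟩
    | single w c =>
      induction Q using Finsupp.induction_linear with
      | zero => exact ⟨0, fun x _ => by simp [ev]⟩
      | add A B hA hB =>
        obtain ⟨R, hR⟩ := hA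
        obtain ⟨T, hT⟩ := hB
        exact ⟨R + T, fun x hx => by rw [ev_add, ev_add, mul_add, hR x hx, hT x hx]⟩
      | single v d =>
        obtain ⟨R, hR⟩ := hsh w v
        refine ⟨(c * d) • R, fun x hx => ?_⟩
        rw [ev_smul, ev_single, ev_single, ← hR x hx]; ring
  haveI : CompactSpace K := isCompact_iff_compactSpace.1 hK
  let A : Subalgebra ℝ C(K, ℝ) :=
    { carrier := {g | ∃ P : List (Fin n) →₀ ℝ, ∀ x : K, g x = ev P x.1}
      mul_mem' := by
        rintro g k ⟨P, hP⟩ ⟨Q, hQ⟩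
        obtain ⟨R, hR⟩ := hmul P Q
        exact ⟨R, fun x => by
          rw [ContinuousMap.mul_apply, hP, hQ, hR _ x.2]⟩
      add_mem' := by
        rintro g k ⟨P, hP⟩ ⟨Q, hQ⟩
        exact ⟨P + Q, fun x => by rw [ContinuousMap.add_apply, hP, hQ, ev_add]⟩
      algebraMap_mem' := fun r => ⟨Finsupp.single [] r, fun x => by
        rw [ev_single, hnil _ x.2]; simp⟩ }
  have hsep : A.SeparatesPoints := by
    intro x y hxy
    have : ∃ w, x.1 w ≠ y.1 w := by
      by_contra hcon
      push Not at hcon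
      exact hxy (Subtype.ext (funext hcon))
    obtain ⟨w, hw⟩ := this
    refine ⟨fun z : K => z.1 w, ⟨⟨fun z : K => z.1 w, (continuous_apply w).comp continuous_subtype_val⟩, ⟨Finsupp.single w 1, ?_⟩, rfl⟩, hw⟩
    intro z; simp [ev_single]
  obtain ⟨g, hg⟩ := ContinuousMap.exists_mem_subalgebra_near_continuous_of_separatesPoints A hsep
    (fun x : K => f x) (by fun_prop) ε hε
  obtain ⟨P, hP⟩ := g.2
  refine ⟨P, fun x hx => ?_⟩
  have := hg ⟨x, hx⟩
  rw [Real.norm_eq_abs] at this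
  rwa [← hP ⟨x, hx⟩]

lemma Hor.prim_bound (hV : 0 ≤ V) {c : ℝ → List (Fin n) → ℝ} (h : Hor K V c) (i : Fin n)
    (P : List (Fin n) →₀ ℝ) {s t κ M : ℝ} (hst : s ≤ t)
    (hM : ∀ u ∈ Icc s t, |ev P (c u) - κ| ≤ M) :
    |ev (prim i P) (c t) - ev (prim i P) (c s) - κ * (c t [i] - c s [i])| ≤ M * V * (t - s) := by
  obtain ⟨C, hC, hE⟩ := ev_prim_err hV i P
  have := mean_value (h := fun u => ev (prim i P) (c u) - κ * c u [i]) (M := M * V) (C := C) hst ?_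
  · refine (le_of_eq ?_).trans this
    congr 1; ring
  · intro a ha b hb hab
    have h1 := hE _ _ _ (h.2 a b)
    have h2 := h.lip [i] a b
    have h3 := hM a ha
    have hab' : |a - b| = b - a := by rw [abs_sub_comm, abs_of_nonneg (by linarith)]
    rw [hab'] at h1 h2
    simp only [List.length_singleton, pow_one] at h2
    have e : ev (prim i P) (c b) - κ * c b [i] - (ev (prim i P) (c a) - κ * c a [i]) =
      (ev P (c a) - κ) * (c b [i] - c a [i]) +
      (ev (prim i P) (c b) - ev (prim i P) (c a) - ev P (c a) * (c b [i] - c a [i])) := by ring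
    rw [e]
    refine (abs_add_le _ _).trans (add_le_add ?_ h1)
    rw [abs_mul, mul_assoc]
    exact mul_le_mul h3 h2 (abs_nonneg _) ((abs_nonneg _).trans h3)

/-- There are no simple bigons of horizontal curves. -/
lemma no_bigon (hV : 0 ≤ V) (hK : IsCompact K) (hnil : ∀ x ∈ K, x [] = 1)
    (hsh : ∀ w v, ∃ P, ∀ x ∈ K, x w * x v = ev P x) {c d : ℝ → List (Fin n) → ℝ}
    (hc : Hor K V c) (hd : Hor K V d) {a b : ℝ} (hab : a < b) (ha : c a = d a) (hb : c b = d b)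
    (hinj : InjOn c (Icc a b)) (hdis : ∀ t ∈ Ioo a b, ∀ t' ∈ Icc a b, c t ≠ d t') : False := by
  have hσ : ∀ (i : Fin n) (u v : ℝ), a < u → u ≤ v → v < b → c v [i] - c u [i] = 0 := by
    intro i u v hu huv hv
    have key : ∀ τ : ℝ, 0 < τ → τ ≤ 1 → a < u - τ → v + τ < b →
        |c v [i] - c u [i]| ≤ τ * (V * (4 + 2 * (b - a))) := by
      intro τ hτ hτ1 hau hvb
      set F : Set (List (Fin n) → ℝ) := d '' Icc a b ∪ (c '' Icc a (u - τ) ∪ c '' Icc (v + τ) b)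
        with hF
      have hFc : IsClosed F := by
        refine IsClosed.union ?_ (IsClosed.union ?_ ?_)
        · exact (isCompact_Icc.image hd.continuous).isClosed
        · exact (isCompact_Icc.image hc.continuous).isClosed
        · exact (isCompact_Icc.image hc.continuous).isClosed
      have hGc : IsClosed (c '' Icc u v) := (isCompact_Icc.image hc.continuous).isClosed
      have hdisj : Disjoint F (c '' Icc u v) := by
        rw [Set.disjoint_left]
        rintro x hx ⟨t, ht, rfl⟩
        have ht' : t ∈ Ioo a b := ⟨lt_of_lt_of_le hu ht.1, lt_of_le_of_lt ht.2 hv⟩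
        rcases hx with ⟨t', ht1, h⟩ | ⟨t', ht1, h⟩ | ⟨t', ht1, h⟩
        · exact hdis t ht' t' ht1 h.symm
        · have := hinj ⟨ht1.1, by linarith [ht1.2]⟩ (Ioo_subset_Icc_self ht') h
          linarith [ht1.2, ht.1]
        · have := hinj ⟨by linarith [ht1.1], ht1.2⟩ (Ioo_subset_Icc_self ht') h
          linarith [ht1.1, ht.2]
      obtain ⟨f, hf0, hf1, hf⟩ := exists_continuous_zero_one_of_isClosed hFc hGc hdisj
      obtain ⟨P, hP⟩ := ev_dense hK hnil hsh f f.continuous hτ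
      have q0 := hd.prim_bound hV i P (κ := 0) (M := τ) hab.le (fun t ht => by
        have h1 := hP (d t) (hd.1 t)
        have h2 : f (d t) = 0 := hf0 (Or.inl ⟨t, ht, rfl⟩)
        rw [h2] at h1; exact h1.le)
      have q1 := hc.prim_bound hV i P (κ := 0) (M := τ) hau.le (fun t ht => by
        have h1 := hP (c t) (hc.1 t)
        have h2 : f (c t) = 0 := hf0 (Or.inr (Or.inl ⟨t, ht, rfl⟩))
        rw [h2] at h1; exact h1.le)
      have q5 := hc.prim_bound hV i P (κ := 0) (M := τ) hvb.le (fun t ht => by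
        have h1 := hP (c t) (hc.1 t)
        have h2 : f (c t) = 0 := hf0 (Or.inr (Or.inr ⟨t, ht, rfl⟩))
        rw [h2] at h1; exact h1.le)
      have q3 := hc.prim_bound hV i P (κ := 1) (M := τ) huv (fun t ht => by
        have h1 := hP (c t) (hc.1 t)
        have h2 : f (c t) = 1 := hf1 ⟨t, ht, rfl⟩
        rw [h2] at h1; exact h1.le)
      have gen : ∀ t, |ev P (c t) - 0| ≤ 2 := fun t => by
        have h1 := hP (c t) (hc.1 t)
        have h2 := hf (c t)
        rw [abs_lt] at h1
        rw [sub_zero, abs_le]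
        constructor <;> linarith [h2.1, h2.2]
      have q2 := hc.prim_bound hV i P (κ := 0) (M := 2) (s := u - τ) (t := u) (by linarith)
        (fun t _ => gen t)
      have q4 := hc.prim_bound hV i P (κ := 0) (M := 2) (s := v) (t := v + τ) (by linarith)
        (fun t _ => gen t)
      rw [ha.symm, hb.symm] at q0
      simp only [zero_mul, sub_zero, one_mul] at q0 q1 q2 q3 q4 q5
      have e1 : u - (u - τ) = τ := by ring
      have e2 : v + τ - v = τ := by ring
      rw [e1] at q2
      rw [e2] at q4
      rw [abs_le] at *
      have hVτ : 0 ≤ V * τ * τ := by positivity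
      constructor <;> nlinarith [q0.1, q0.2, q1.1, q1.2, q2.1, q2.2, q3.1, q3.2, q4.1, q4.2, q5.1,
        q5.2]
    by_contra hne
    have hpos : 0 < |c v [i] - c u [i]| := abs_pos.2 hne
    have hD : 0 ≤ V * (4 + 2 * (b - a)) := mul_nonneg hV (by linarith)
    set D := V * (4 + 2 * (b - a)) with hDdef
    set τ := min (min 1 ((u - a) / 2)) (min ((b - v) / 2) (|c v [i] - c u [i]| / (2 * (D + 1))))
      with hτ
    have hτ0 : 0 < τ := by
      refine lt_min (lt_min one_pos (by linarith)) (lt_min (by linarith) (by positivity))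
    have t1 : τ ≤ 1 := (min_le_left _ _).trans (min_le_left _ _)
    have t2 : τ ≤ (u - a) / 2 := (min_le_left _ _).trans (min_le_right _ _)
    have t3 : τ ≤ (b - v) / 2 := (min_le_right _ _).trans (min_le_left _ _)
    have t4 : τ ≤ |c v [i] - c u [i]| / (2 * (D + 1)) := (min_le_right _ _).trans (min_le_right _ _)
    have := key τ hτ0 t1 (by linarith) (by linarith)
    rw [le_div_iff₀ (by positivity)] at t4
    nlinarith
  have hconst : ∀ u v, a < u → u ≤ v → v < b → c u = c v := by
    intro u v hu huv hv
    funext w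
    cases w with
    | nil => rw [hnil _ (hc.1 u), hnil _ (hc.1 v)]
    | cons i w =>
      have := mean_value (h := fun t => c t (i :: w)) (M := 0) (C := V ^ (w.length + 1)) huv ?_
      · rw [zero_mul] at this
        have := abs_eq_zero.1 (le_antisymm this (abs_nonneg _))
        linarith
      · intro s hs t ht hst
        have h1 := (hc.2 s t).2 i w
        rw [hσ i s t (by linarith [hs.1]) hst (by linarith [ht.2]), mul_zero, sub_zero, sq_abs] at h1
        rw [zero_mul, zero_add]
        refine h1.trans (le_of_eq ?_)
        ring
  have h1 : (2 * a + b) / 3 ∈ Icc a b := ⟨by linarith, by linarith⟩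
  have h2 : (a + 2 * b) / 3 ∈ Icc a b := ⟨by linarith, by linarith⟩
  have := hinj h1 h2 (hconst _ _ (by linarith) (by linarith) (by linarith))
  linarith

lemma rho_along (hV : 0 ≤ V) (hK : IsCompact K) {c : ℝ → List (Fin n) → ℝ} (hc : Hor K V c)
    {L t : ℝ} (hL : rho K V (c 0) (c L) = L) (ht : t ∈ Icc 0 L) : rho K V (c 0) (c t) = t := by
  have h1 : Conn K V (c 0) (c t) t := ⟨ht.1, c, hc, rfl, rfl⟩
  have h2 := rho_attained hK h1
  have h3 : Conn K V (c t) (c L) (L - t) := by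
    refine ⟨sub_nonneg.2 ht.2, fun u => c (t + u), hc.comp hV (fun s u => ?_), by simp, by simp⟩
    apply le_of_eq; congr 1; ring
  have h4 := rho_le (h2.trans hV h3)
  have h5 := rho_le h1
  linarith

lemma geod_unique (hV : 0 ≤ V) (hK : IsCompact K) (hnil : ∀ x ∈ K, x [] = 1)
    (hsh : ∀ w v, ∃ P, ∀ x ∈ K, x w * x v = ev P x) {c d : ℝ → List (Fin n) → ℝ}
    (hc : Hor K V c) (hd : Hor K V d) {L : ℝ} (h0 : c 0 = d 0) (h1 : c L = d L)
    (hL : rho K V (c 0) (c L) = L) : ∀ t ∈ Icc 0 L, c t = d t := by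
  have hLd : rho K V (d 0) (d L) = L := by rw [← h0, ← h1]; exact hL
  intro t₀ ht₀
  by_contra hne
  have hclosed : IsClosed {t | c t = d t} := isClosed_eq hc.continuous hd.continuous
  obtain ⟨a, ⟨⟨ha1, ha2⟩, ha3⟩⟩ := (isCompact_Icc.inter_right hclosed : IsCompact
    (Icc 0 t₀ ∩ {t | c t = d t})).exists_isGreatest ⟨0, ⟨le_rfl, ht₀.1⟩, h0⟩
  obtain ⟨b, ⟨⟨hb1, hb2⟩, hb3⟩⟩ := (isCompact_Icc.inter_right hclosed : IsCompact
    (Icc t₀ L ∩ {t | c t = d t})).exists_isLeast ⟨L, ⟨ht₀.2, le_rfl⟩, h1⟩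
  simp only [mem_setOf_eq] at ha2 hb2
  have hat : a < t₀ := lt_of_le_of_ne ha1.2 (fun h => hne (h ▸ ha2))
  have htb : t₀ < b := lt_of_le_of_ne hb1.1 (fun h => hne (h ▸ hb2))
  refine no_bigon hV hK hnil hsh hc hd (hat.trans htb) ha2 hb2 ?_ ?_
  · intro s hs t ht hst
    have e1 := rho_along hV hK hc hL (t := s) ⟨ha1.1.trans hs.1, hs.2.trans hb1.2⟩
    have e2 := rho_along hV hK hc hL (t := t) ⟨ha1.1.trans ht.1, ht.2.trans hb1.2⟩
    rw [← e1, ← e2, hst]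
  · intro s hs t ht hst
    have e1 := rho_along hV hK hc hL (t := s) ⟨ha1.1.trans hs.1.le, hs.2.le.trans hb1.2⟩
    have e2 := rho_along hV hK hd hLd (t := t) ⟨ha1.1.trans ht.1, ht.2.trans hb1.2⟩
    have e3 : s = t := by rw [← e1, ← e2, hst, h0]
    subst e3
    rcases le_total s t₀ with h | h
    · exact absurd (ha3 ⟨⟨ha1.1.trans hs.1.le, h⟩, hst⟩) (not_le.2 hs.1)
    · exact absurd (hb3 ⟨⟨h, hs.2.le.trans hb1.2⟩, hst⟩) (not_le.2 hs.2)

end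

/-! ### Equal signatures imply a thin homotopy -/

def clamp (u : ℝ) : ℝ := max 0 (min 1 u)

lemma clamp_mem (u : ℝ) : clamp u ∈ Icc (0:ℝ) 1 :=
  ⟨le_max_left _ _, max_le zero_le_one (min_le_left _ _)⟩

lemma clamp_of_mem {u : ℝ} (h : u ∈ Icc (0:ℝ) 1) : clamp u = u := by
  rw [clamp, min_eq_right h.2, max_eq_right h.1]

lemma clamp_lip (u v : ℝ) : |clamp u - clamp v| ≤ |u - v| := by
  have h1 := abs_max_sub_max_le_max 0 (min 1 u) 0 (min 1 v)
  have h2 := abs_min_sub_min_le_max 1 u 1 v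
  simp only [sub_self, abs_zero] at h1 h2
  rw [max_eq_right (abs_nonneg (min 1 u - min 1 v))] at h1
  rw [max_eq_right (abs_nonneg (u - v))] at h2
  exact h1.trans h2

lemma conn_lift {K : Set (List (Fin n) → ℝ)} {γ : ℝ → Fin n → ℝ} {V : ℝ} (h : Nice γ V)
    (hK : ∀ t ∈ Icc (0:ℝ) 1, lift γ t ∈ K) {s t : ℝ} (hs : s ∈ Icc (0:ℝ) 1)
    (ht : t ∈ Icc (0:ℝ) 1) : Conn K V (lift γ s) (lift γ t) |s - t| := by
  have base : Hor K V (fun u => lift γ (clamp u)) :=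
    ⟨fun u => hK _ (clamp_mem u), fun u v =>
      (lift_hrel h (clamp_mem u) (clamp_mem v)).mono h.1 (abs_nonneg _) (clamp_lip u v)⟩
  wlog hst : s ≤ t generalizing s t
  · rw [abs_sub_comm]
    exact (this ht hs (le_of_not_ge hst)).symm h.1
  · have e : |s - t| = t - s := by rw [abs_sub_comm, abs_of_nonneg (sub_nonneg.2 hst)]
    refine ⟨abs_nonneg _, fun u => lift γ (clamp (s + u)), ?_, ?_, ?_⟩
    · exact base.comp h.1 (φ := fun u => s + u) (fun a b => by simp)
    · simp [clamp_of_mem hs]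
    · rw [e]; simp [clamp_of_mem ht]

lemma thin_of_sig {p : Fin n → ℝ} {α β : ℝ → (Fin n → ℝ)} {V : ℝ}
    (hα : Nice α V) (hα0 : α 0 = p) (hα1 : α 1 = p)
    (hβ : Nice β V) (hβ0 : β 0 = p) (hβ1 : β 1 = p)
    (hsig : lift α 1 = lift β 1) : ∃ η, IsThinHomotopy p α β η := by
  have hV := hα.1
  set K : Set (List (Fin n) → ℝ) := lift α '' Icc 0 1 ∪ lift β '' Icc 0 1 with hKdef
  have hcl : ∀ γ : ℝ → Fin n → ℝ, Nice γ V → ContinuousOn (lift γ) (Icc 0 1) := fun γ h =>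
    continuousOn_pi.2 fun w => chenS_cont h w
  have hK : IsCompact K := (isCompact_Icc.image_of_continuousOn (hcl α hα)).union
    (isCompact_Icc.image_of_continuousOn (hcl β hβ))
  have hnil : ∀ x ∈ K, x [] = 1 := by
    rintro x (⟨t, -, rfl⟩ | ⟨t, -, rfl⟩) <;> simp [lift, chenS]
  have hsh : ∀ w v, ∃ P, ∀ x ∈ K, x w * x v = ev P x := by
    intro w v
    obtain ⟨P, hP⟩ := shuffle w v
    refine ⟨P, ?_⟩
    rintro x (⟨t, ht, rfl⟩ | ⟨t, ht, rfl⟩)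
    exacts [hP α V hα t ht, hP β V hβ t ht]
  have hKα : ∀ t ∈ Icc (0:ℝ) 1, lift α t ∈ K := fun t ht => Or.inl ⟨t, ht, rfl⟩
  have hKβ : ∀ t ∈ Icc (0:ℝ) 1, lift β t ∈ K := fun t ht => Or.inr ⟨t, ht, rfl⟩
  have hsig0 : lift α 0 = lift β 0 := by
    funext w
    cases w <;> simp [lift, chenS]
  have m0 : (0:ℝ) ∈ Icc (0:ℝ) 1 := by simp
  have m1 : (1:ℝ) ∈ Icc (0:ℝ) 1 := by simp
  have hconn : ∀ t ∈ Icc (0:ℝ) 1, ∃ L, Conn K V (lift α t) (lift β t) L := by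
    intro t ht
    have a1 := conn_lift hα hKα ht m0
    have a2 := conn_lift hβ hKβ m0 ht
    rw [hsig0] at a1
    exact ⟨_, a1.trans hV a2⟩
  set r : ℝ → ℝ := fun t => rho K V (lift α t) (lift β t) with hr
  have hatt : ∀ t ∈ Icc (0:ℝ) 1, Conn K V (lift α t) (lift β t) (r t) := by
    intro t ht
    obtain ⟨L, hL⟩ := hconn t ht
    exact rho_attained hK hL
  have hrle : ∀ s ∈ Icc (0:ℝ) 1, ∀ t ∈ Icc (0:ℝ) 1, r t ≤ r s + 2 * |s - t| := by
    intro s hs t ht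
    have a1 := (conn_lift hα hKα ht hs).trans hV ((hatt s hs).trans hV (conn_lift hβ hKβ hs ht))
    have := rho_le a1
    rw [abs_sub_comm t s] at this
    have e : r t = rho K V (lift α t) (lift β t) := rfl
    linarith
  have hrc : ContinuousOn r (Icc 0 1) := by
    have : LipschitzOnWith 2 r (Icc 0 1) := by
      refine LipschitzOnWith.of_dist_le_mul fun s hs t ht => ?_
      rw [Real.dist_eq, Real.dist_eq, abs_le]
      have b1 := hrle s hs t ht
      have b2 := hrle t ht s hs
      rw [abs_sub_comm] at b2
      push_cast
      constructor <;> linarith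
    exact this.continuousOn
  have hr0 : ∀ t ∈ Icc (0:ℝ) 1, 0 ≤ r t := fun t ht => (hatt t ht).1
  have hrz : ∀ t ∈ Icc (0:ℝ) 1, lift α t = lift β t → r t = 0 := by
    intro t ht h
    refine le_antisymm ?_ (hr0 t ht)
    have := conn_lift hα hKα ht ht
    nth_rewrite 2 [h] at this
    simpa using rho_le this
  have hch : ∀ t : ℝ, ∃ c : ℝ → List (Fin n) → ℝ, t ∈ Icc (0:ℝ) 1 →
      Hor K V c ∧ c 0 = lift α t ∧ c (r t) = lift β t := by
    intro t
    by_cases ht : t ∈ Icc (0:ℝ) 1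
    · obtain ⟨-, c, hc⟩ := hatt t ht
      exact ⟨c, fun _ => hc⟩
    · exact ⟨fun _ _ => 0, fun h => absurd h ht⟩
  choose c hc using hch
  have hpα : ∀ t ∈ Icc (0:ℝ) 1, (fun i => p i + lift α t [i]) = α t := by
    intro t ht; funext i; rw [lift_single hα i ht, hα0]; ring
  have hpβ : ∀ t ∈ Icc (0:ℝ) 1, (fun i => p i + lift β t [i]) = β t := by
    intro t ht; funext i; rw [lift_single hβ i ht, hβ0]; ring
  refine ⟨fun q i => p i + c q.2 (q.1 * r q.2) [i], ?_, ?_, ?_, ?_, ?_⟩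
  · have main : ContinuousOn (fun q : ℝ × ℝ => c q.2 (q.1 * r q.2)) (Icc 0 1 ×ˢ Icc 0 1) := by
      rintro ⟨s0, t0⟩ ⟨hs0, ht0⟩
      simp only at hs0 ht0
      rw [ContinuousWithinAt, Filter.tendsto_iff_ultrafilter]
      intro g hg
      have hgm : (Icc (0:ℝ) 1 ×ˢ Icc (0:ℝ) 1) ∈ (g : Filter (ℝ × ℝ)) := hg self_mem_nhdsWithin
      have hgn : (g : Filter (ℝ × ℝ)) ≤ 𝓝 (s0, t0) := hg.trans nhdsWithin_le_nhds
      have hg2 : Filter.Tendsto (fun q : ℝ × ℝ => q.2) g (𝓝[Icc 0 1] t0) := by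
        refine tendsto_nhdsWithin_iff.2 ⟨?_, ?_⟩
        · exact (continuous_snd.tendsto (s0, t0)).mono_left hgn
        · filter_upwards [hgm] with q hq using hq.2
      have hg1 : Filter.Tendsto (fun q : ℝ × ℝ => q.1) g (𝓝 s0) :=
        (continuous_fst.tendsto (s0, t0)).mono_left hgn
      have hgr : Filter.Tendsto (fun q : ℝ × ℝ => r q.2) g (𝓝 (r t0)) := (hrc t0 ht0).tendsto.comp hg2
      have hgH : ∀ᶠ q in (g : Filter (ℝ × ℝ)), Hor K V (c q.2) := by
        filter_upwards [hgm] with q hq using (hc q.2 hq.2).1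
      obtain ⟨d, hd, hlim⟩ := (isCompact_hor (V := V) hK).ultrafilter_le_nhds
        (g.map (fun q => c q.2)) (by
          rw [Ultrafilter.coe_map, Filter.le_principal_iff]; exact hgH)
      have hlim' : Filter.Tendsto (fun q : ℝ × ℝ => c q.2) g (𝓝 d) := by
        rw [Ultrafilter.coe_map] at hlim; exact hlim
      have hev : ∀ (φ : ℝ × ℝ → ℝ) (x : ℝ), Filter.Tendsto φ g (𝓝 x) →
          Filter.Tendsto (fun q : ℝ × ℝ => c q.2 (φ q)) g (𝓝 (d x)) := by
        intro φ x hφ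
        have h1 := continuousOn_eval (K := K) (V := V) (x, d) ⟨mem_univ _, hd⟩
        have h2 : Filter.Tendsto (fun q : ℝ × ℝ => (φ q, c q.2)) g
            (𝓝[univ ×ˢ {c | Hor K V c}] (x, d)) := by
          refine tendsto_nhdsWithin_iff.2 ⟨hφ.prodMk_nhds hlim', ?_⟩
          filter_upwards [hgH] with q hq using ⟨mem_univ _, hq⟩
        exact h1.tendsto.comp h2
      have hd0 : d 0 = lift α t0 := by
        refine tendsto_nhds_unique (hev (fun _ => 0) 0 tendsto_const_nhds) ?_
        refine Filter.Tendsto.congr' ?_ ((hcl α hα t0 ht0).tendsto.comp hg2)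
        filter_upwards [hgm] with q hq using (hc q.2 hq.2).2.1.symm
      have hd1 : d (r t0) = lift β t0 := by
        refine tendsto_nhds_unique (hev (fun q => r q.2) _ hgr) ?_
        refine Filter.Tendsto.congr' ?_ ((hcl β hβ t0 ht0).tendsto.comp hg2)
        filter_upwards [hgm] with q hq using (hc q.2 hq.2).2.2.symm
      obtain ⟨k0, k1, k2⟩ := hc t0 ht0
      have huniq := geod_unique hV hK hnil hsh k0 hd (L := r t0) (k1.trans hd0.symm)
        (k2.trans hd1.symm) (by rw [k1, k2])
      have := hev (fun q => q.1 * r q.2) _ (hg1.mul hgr)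
      rw [← huniq (s0 * r t0) ⟨mul_nonneg hs0.1 (hr0 t0 ht0),
        mul_le_of_le_one_left (hr0 t0 ht0) hs0.2⟩] at this
      exact this
    refine continuousOn_pi.2 fun i => continuousOn_const.add ?_
    exact continuousOn_pi.1 main [i]
  · intro t ht
    simp only [zero_mul]
    rw [(hc t ht).2.1, hpα t ht]
  · intro t ht
    simp only [one_mul]
    rw [(hc t ht).2.2, hpβ t ht]
  · intro s hs
    simp only [hrz 0 m0 hsig0, hrz 1 m1 hsig, mul_zero]
    rw [(hc 0 m0).2.1, (hc 1 m1).2.1, hpα 0 m0, hpα 1 m1]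
    exact ⟨hα0, hα1⟩
  · rintro _ ⟨⟨s, t⟩, ⟨hs, ht⟩, rfl⟩
    simp only at hs ht ⊢
    rcases (hc t ht).1.1 (s * r t) with ⟨u, hu, he⟩ | ⟨u, hu, he⟩
    · left; exact ⟨u, hu, by rw [← he, hpα u hu]⟩
    · right; exact ⟨u, hu, by rw [← he, hpβ u hu]⟩

/-! ### Weighted iterated integrals -/

/-- Iterated integrals of the forms `f j (x (idx j)) dx_(idx j)`. -/
def J (γ : ℝ → Fin n → ℝ) (idx : ℕ → Fin n) (f : ℕ → ℝ → ℝ) : ℕ → ℝ → ℝ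
  | 0, _ => 1
  | j + 1, t => ∫ s in (0:ℝ)..t, (J γ idx f j s * f j (γ s (idx j))) * pathDeriv γ (idx j) s

section
variable {γ : ℝ → Fin n → ℝ} {V : ℝ} {idx : ℕ → Fin n} {f : ℕ → ℝ → ℝ}

lemma comp_cont (h : Nice γ V) {g : ℝ → ℝ} (hg : Continuous g) (i : Fin n) :
    ContinuousOn (fun s => g (γ s i)) (Icc 0 1) :=
  hg.comp_continuousOn (continuousOn_pi.1 h.2.1 i)

lemma J_cont (h : Nice γ V) (hf : ∀ j, Continuous (f j)) (k : ℕ) :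
    ContinuousOn (J γ idx f k) (Icc 0 1) := by
  induction k with
  | zero => exact continuousOn_const
  | succ k ih => exact h.primitive_cont (idx k) (ih.mul (comp_cont h (hf k) _))

lemma J_congr {f g : ℕ → ℝ → ℝ} {k : ℕ} (hfg : ∀ j < k, f j = g j) :
    J γ idx f k = J γ idx g k := by
  induction k with
  | zero => rfl
  | succ k ih =>
    funext t
    simp only [J]
    rw [ih fun j hj => hfg j (hj.trans k.lt_succ_self), hfg k k.lt_succ_self]

lemma J_sum (h : Nice γ V) (hf : ∀ j, Continuous (f j)) {q : ℕ} (N : ℕ) (g : ℕ → ℝ → ℝ)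
    (hg : ∀ m, Continuous (g m)) (u : ℝ → ℝ)
    (hu : ∀ s ∈ Icc (0:ℝ) 1, u (γ s (idx q)) = ∑ m ∈ Finset.range N, g m (γ s (idx q)))
    {k : ℕ} (hqk : q < k) : ∀ t ∈ Icc (0:ℝ) 1,
    J γ idx (Function.update f q u) k t =
      ∑ m ∈ Finset.range N, J γ idx (Function.update f q (g m)) k t := by
  have hup : ∀ m j, Continuous (Function.update f q (g m) j) := by
    intro m j
    by_cases hj : j = q
    · subst hj; simpa using hg m
    · simpa [hj] using hf j
  have m0 : (0:ℝ) ∈ Icc (0:ℝ) 1 := by simp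
  induction k with
  | zero => omega
  | succ k ih =>
    intro t ht
    simp only [J]
    rw [← intervalIntegral.integral_finset_sum]
    · refine intervalIntegral.integral_congr fun s hs => ?_
      have hs' : s ∈ Icc (0:ℝ) 1 := uIcc_subset_Icc m0 ht hs
      rw [← Finset.sum_mul]
      congr 1
      by_cases hk : k = q
      · subst hk
        simp only [Function.update_self]
        rw [hu s hs', Finset.mul_sum]
        refine Finset.sum_congr rfl fun m _ => ?_
        rw [J_congr (f := Function.update f k u) (g := Function.update f k (g m))]
        intro j hj
        simp [Function.update_of_ne hj.ne]
      · have hk' : q < k := by omega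
        simp only [Function.update_of_ne hk]
        rw [ih hk' s hs', Finset.sum_mul]
    · intro m _
      exact h.ii _ ((J_cont h (hup m) k).mul (comp_cont h (hup m k) _)) m0 ht

lemma J_sub (h : Nice γ V) (hf : ∀ j, Continuous (f j)) (j : ℕ) {s t : ℝ}
    (hs : s ∈ Icc (0:ℝ) 1) (ht : t ∈ Icc (0:ℝ) 1) :
    J γ idx f (j + 1) t - J γ idx f (j + 1) s =
      ∫ u in s..t, (J γ idx f j u * f j (γ u (idx j))) * pathDeriv γ (idx j) u := by
  simp only [J]
  exact h.primitive_sub (f := fun s => J γ idx f j s * f j (γ s (idx j))) (idx j)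
    ((J_cont h hf j).mul (comp_cont h (hf j) (idx j))) hs ht

lemma J_enorm (h : Nice γ V) (hf : ∀ j, Continuous (f j)) {k : ℕ} : ∀ t ∈ Icc (0:ℝ) 1, ‖J γ idx f k t‖ₑ ≤ ∏ j ∈ Finset.range k,
    ∫⁻ s in Icc (0:ℝ) 1, ‖f j (γ s (idx j))‖ₑ * ‖pathDeriv γ (idx j) s‖ₑ := by
  induction k with
  | zero => intro t _; simp [J]
  | succ k ih =>
    intro t ht
    rw [Finset.prod_range_succ]
    simp only [J]
    rw [intervalIntegral.integral_of_le ht.1]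
    refine (enorm_integral_le_lintegral_enorm _).trans ?_
    have hsub : Ioc 0 t ⊆ Icc (0:ℝ) 1 := fun s hs => ⟨hs.1.le, hs.2.trans ht.2⟩
    have hm : AEMeasurable (fun s => ‖f k (γ s (idx k))‖ₑ * ‖pathDeriv γ (idx k) s‖ₑ)
        (volume.restrict (Icc 0 1)) :=
      ((comp_cont h (hf k) (idx k)).aemeasurable measurableSet_Icc).enorm.mul
        (measurable_pathDeriv γ (idx k)).aemeasurable.enorm
    rw [← lintegral_const_mul'' _ hm]
    refine le_trans ?_ (lintegral_mono_set hsub)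
    refine setLIntegral_mono' measurableSet_Ioc fun s hs => ?_
    rw [enorm_mul, enorm_mul, mul_assoc]
    gcongr
    exact ih s (hsub hs)

end

/-! ### Holonomy -/

/-- Separation of the supports of `u` and `v` along `X`. -/
def Sep (X : Set (Fin n → ℝ)) (δ : ℝ) (i i' : Fin n) (u v : ℝ → ℝ) : Prop :=
  ∀ x ∈ X, ∀ a b, |a - x i| < δ → |b - x i'| < δ → u a * v b = 0

def act (idx : ℕ → Fin n) (f : ℕ → ℝ → ℝ) (x y : Fin n → ℝ) (v : ℕ → ℝ) : ℕ → ℝ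
  | 0 => v 0
  | j + 1 => v (j + 1) + (∫ u in x (idx j)..y (idx j), f j u) * v j

lemma act_self (idx : ℕ → Fin n) (f : ℕ → ℝ → ℝ) (x : Fin n → ℝ) (v : ℕ → ℝ) :
    act idx f x x v = v := by
  funext j; cases j <;> simp [act]

lemma mem_uIcc_lt {a b w δ : ℝ} (hw : w ∈ uIcc a b) (h : |a - b| < δ) :
    |w - a| < δ ∧ |w - b| < δ := by
  rw [abs_lt] at *
  rcases le_total a b with hab | hab
  · rw [uIcc_of_le hab] at hw
    rw [abs_lt]
    obtain ⟨h1, h2⟩ := hw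
    refine ⟨⟨?_, ?_⟩, ?_, ?_⟩ <;> linarith
  · rw [uIcc_of_ge hab] at hw
    rw [abs_lt]
    obtain ⟨h1, h2⟩ := hw
    refine ⟨⟨?_, ?_⟩, ?_, ?_⟩ <;> linarith

lemma act_cocycle {X : Set (Fin n → ℝ)} {δ : ℝ} {idx : ℕ → Fin n} {f : ℕ → ℝ → ℝ}
    (hf : ∀ j, Continuous (f j)) (hsep : ∀ j, Sep X δ (idx j) (idx (j + 1)) (f j) (f (j + 1)))
    {x y z : Fin n → ℝ} (hy : y ∈ X) (hxy : dist x y < δ) (hyz : dist y z < δ) (v : ℕ → ℝ) :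
    act idx f y z (act idx f x y v) = act idx f x z v := by
  have hc : ∀ (j : ℕ) (a b : ℝ), IntervalIntegrable (f j) volume a b :=
    fun j a b => (hf j).intervalIntegrable a b
  have hxy' : ∀ i, |x i - y i| < δ := fun i => (dist_le_pi_dist x y i).trans_lt hxy
  have hyz' : ∀ i, |y i - z i| < δ := fun i => (dist_le_pi_dist y z i).trans_lt hyz
  have hprod : ∀ j, (∫ u in x (idx j)..y (idx j), f j u) *
      (∫ u in y (idx (j+1))..z (idx (j+1)), f (j+1) u) = 0 := by
    intro j
    by_cases h : ∀ u ∈ uIcc (x (idx j)) (y (idx j)), f j u = 0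
    · rw [intervalIntegral.integral_congr (g := fun _ => 0) (fun u hu => h u hu)]; simp
    · push Not at h
      obtain ⟨a, ha, hne⟩ := h
      have : ∀ u ∈ uIcc (y (idx (j+1))) (z (idx (j+1))), f (j+1) u = 0 := by
        intro b hb
        have := hsep j y hy a b (mem_uIcc_lt ha (hxy' _)).2 (mem_uIcc_lt hb (hyz' _)).1
        exact (mul_eq_zero.1 this).resolve_left hne
      rw [intervalIntegral.integral_congr (a := y (idx (j+1))) (g := fun _ => 0)
        (fun u hu => this u hu)]; simp
  funext j
  match j with
  | 0 => rfl
  | 1 =>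
    simp only [act]
    rw [← intervalIntegral.integral_add_adjacent_intervals (hc 0 (x (idx 0)) (y (idx 0)))
      (hc 0 (y (idx 0)) (z (idx 0)))]
    ring
  | j + 2 =>
    simp only [act]
    rw [← intervalIntegral.integral_add_adjacent_intervals
      (hc (j+1) (x (idx (j+1))) (y (idx (j+1)))) (hc (j+1) (y (idx (j+1))) (z (idx (j+1))))]
    linear_combination v j * hprod j

/-- On short intervals the weighted iterated integrals are transported by `act`. -/
lemma J_act {X : Set (Fin n → ℝ)} {δ V : ℝ} {γ : ℝ → Fin n → ℝ} {idx : ℕ → Fin n}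
    {f : ℕ → ℝ → ℝ} (h : Nice γ V) (hX : ∀ t ∈ Icc (0:ℝ) 1, γ t ∈ X)
    (hf : ∀ j, Continuous (f j)) (hsep : ∀ j, Sep X δ (idx j) (idx (j + 1)) (f j) (f (j + 1)))
    {s t : ℝ} (hs : s ∈ Icc (0:ℝ) 1) (ht : t ∈ Icc (0:ℝ) 1)
    (hst : ∀ u ∈ uIcc s t, ∀ w ∈ uIcc s t, dist (γ u) (γ w) < δ) :
    (fun j => J γ idx f j t) = act idx f (γ s) (γ t) (fun j => J γ idx f j s) := by
  have hsub := uIcc_subset_Icc hs ht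
  have hvan : ∀ j, ∀ u ∈ uIcc s t, (J γ idx f j u - J γ idx f j s) * f j (γ u (idx j)) = 0 := by
    intro j u hu
    cases j with
    | zero => simp [J]
    | succ j =>
      by_cases hne : f (j+1) (γ u (idx (j+1))) = 0
      · rw [hne, mul_zero]
      · have : J γ idx f (j+1) u - J γ idx f (j+1) s = 0 := by
          rw [J_sub h hf j hs (hsub hu)]
          rw [intervalIntegral.integral_congr (g := fun _ => 0)]
          · simp
          · intro w hw
            have hw' : w ∈ uIcc s t := uIcc_subset_uIcc_left hu hw
            have d := hst w hw' u hu
            have d' : |γ w (idx j) - γ u (idx j)| < δ := (dist_le_pi_dist _ _ (idx j)).trans_lt d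
            have := hsep j (γ u) (hX u (hsub hu)) (γ w (idx j)) (γ u (idx (j+1))) d'
              (by simpa using (dist_nonneg.trans_lt d))
            have := (mul_eq_zero.1 this).resolve_right hne
            simp [this]
        rw [this, zero_mul]
  funext j
  cases j with
  | zero => simp [act, J]
  | succ j =>
    simp only [act]
    have hφ : ∀ x, HasDerivAt (fun x => ∫ u in (0:ℝ)..x, f j u) (f j x) x := fun x =>
      (hf j).integral_hasStrictDerivAt 0 x |>.hasDerivAt
    have e1 := h.ftc (idx j) hφ (hf j) hs ht
    rw [intervalIntegral.integral_interval_sub_left ((hf j).intervalIntegrable _ _)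
      ((hf j).intervalIntegrable _ _)] at e1
    rw [← e1]
    have e2 := J_sub (idx := idx) h hf j hs ht
    have e3 : (∫ u in s..t, J γ idx f j u * f j (γ u (idx j)) * pathDeriv γ (idx j) u) =
        (∫ u in s..t, f j (γ u (idx j)) * pathDeriv γ (idx j) u) * J γ idx f j s := by
      rw [← intervalIntegral.integral_mul_const]
      refine intervalIntegral.integral_congr fun u hu => ?_
      have := hvan j u hu
      linear_combination pathDeriv γ (idx j) u * this
    rw [← e3, ← e2]
    ring

lemma holonomy {p : Fin n → ℝ} {α β : ℝ → Fin n → ℝ} {V : ℝ} (hα : Nice α V) (hβ : Nice β V)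
    {η : ℝ × ℝ → Fin n → ℝ} (hη : IsThinHomotopy p α β η) {δ : ℝ} (hδ : 0 < δ)
    {idx : ℕ → Fin n} {f : ℕ → ℝ → ℝ} (hf : ∀ j, Continuous (f j))
    (hsep : ∀ j, Sep (α '' Icc 0 1 ∪ β '' Icc 0 1) δ (idx j) (idx (j + 1)) (f j) (f (j + 1)))
    (k : ℕ) : J α idx f k 1 = J β idx f k 1 := by
  set X := α '' Icc (0:ℝ) 1 ∪ β '' Icc (0:ℝ) 1 with hXdef
  obtain ⟨hc, h0, h1, hp, him⟩ := hη
  have hX : ∀ s ∈ Icc (0:ℝ) 1, ∀ t ∈ Icc (0:ℝ) 1, η (s, t) ∈ X := fun s hs t ht =>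
    him ⟨(s, t), ⟨hs, ht⟩, rfl⟩
  have huc := (isCompact_Icc.prod isCompact_Icc).uniformContinuousOn_of_continuous hc
  rw [Metric.uniformContinuousOn_iff] at huc
  obtain ⟨τ, hτ, huc⟩ := huc δ hδ
  obtain ⟨N', hN'⟩ := exists_nat_one_div_lt hτ
  set N : ℕ := N' + 1 with hN
  have hN0 : (0:ℝ) < N := by rw [hN]; positivity
  have hNτ : 1 / (N:ℝ) < τ := by rw [hN]; push_cast; exact hN'
  have hd : ∀ s ∈ Icc (0:ℝ) 1, ∀ s' ∈ Icc (0:ℝ) 1, ∀ t ∈ Icc (0:ℝ) 1, ∀ t' ∈ Icc (0:ℝ) 1,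
      |s - s'| ≤ 1 / N → |t - t'| ≤ 1 / N → dist (η (s, t)) (η (s', t')) < δ := by
    intro s hs s' hs' t ht t' ht' a b
    refine huc (s, t) ⟨hs, ht⟩ (s', t') ⟨hs', ht'⟩ ?_
    rw [Prod.dist_eq]
    exact max_lt (a.trans_lt hNτ) (b.trans_lt hNτ)
  have hmem : ∀ m : ℕ, m ≤ N → (m:ℝ) / N ∈ Icc (0:ℝ) 1 := fun m hm =>
    ⟨by positivity, (div_le_one hN0).2 (by exact_mod_cast hm)⟩
  have hstep : ∀ m : ℕ, ((m + 1 : ℕ) : ℝ) / N - (m:ℝ) / N = 1 / N := by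
    intro m; push_cast; ring
  have hstep1 : ∀ m : ℕ, |((m + 1 : ℕ) : ℝ) / N - (m:ℝ) / N| ≤ 1 / N := by
    intro m; rw [hstep, abs_of_nonneg (by positivity)]
  have hstep2 : ∀ m : ℕ, |(m:ℝ) / N - ((m + 1 : ℕ) : ℝ) / N| ≤ 1 / N := by
    intro m; rw [abs_sub_comm]; exact hstep1 m
  have hz : ∀ s : ℝ, |s - s| ≤ 1 / N := by intro s; rw [sub_self, abs_zero]; positivity
  let hol : ℝ → ℕ → ℕ → ℝ := fun s m => Nat.rec (fun j => if j = 0 then (1:ℝ) else 0)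
    (fun m v => act idx f (η (s, (m:ℝ) / N)) (η (s, ((m + 1 : ℕ):ℝ) / N)) v) m
  have hol0 : ∀ s, hol s 0 = fun j => if j = 0 then (1:ℝ) else 0 := fun s => rfl
  have holS : ∀ s m, hol s (m + 1) =
    act idx f (η (s, (m:ℝ) / N)) (η (s, ((m + 1 : ℕ):ℝ) / N)) (hol s m) := fun s m => rfl
  have hNN : (N:ℝ) / N = 1 := div_self hN0.ne'
  have htr : ∀ s ∈ Icc (0:ℝ) 1, ∀ s' ∈ Icc (0:ℝ) 1, |s - s'| ≤ 1 / N → ∀ m ≤ N,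
      hol s' m = act idx f (η (s, (m:ℝ) / N)) (η (s', (m:ℝ) / N)) (hol s m) := by
    intro s hs s' hs' hss m
    induction m with
    | zero =>
      intro _
      simp only [Nat.cast_zero, zero_div, (hp s hs).1, (hp s' hs').1, act_self, hol0]
    | succ m ih =>
      intro hm
      have hm' : m ≤ N := by omega
      have a0 := hmem m hm'
      have a1 := hmem (m+1) hm
      rw [holS, ih hm', holS]
      rw [act_cocycle hf hsep (hX s' hs' _ a0) (hd s hs s' hs' _ a0 _ a0 hss (hz _))
        (hd s' hs' s' hs' _ a0 _ a1 (hz _) (hstep2 m))]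
      rw [act_cocycle hf hsep (hX s hs _ a1) (hd s hs s hs _ a0 _ a1 (hz _) (hstep2 m))
        (hd s hs s' hs' _ a1 _ a1 hss (hz _))]
  have hend : ∀ m ≤ N, hol ((m:ℝ) / N) N = hol 0 N := by
    intro m
    induction m with
    | zero => intro _; simp
    | succ m ih =>
      intro hm
      have hm' : m ≤ N := by omega
      rw [← ih hm', htr _ (hmem m hm') _ (hmem (m+1) hm) (hstep2 m) N le_rfl, hNN,
        (hp _ (hmem m hm')).2, (hp _ (hmem (m+1) hm)).2, act_self]
  have hJ : ∀ (γ : ℝ → Fin n → ℝ) (s : ℝ), s ∈ Icc (0:ℝ) 1 → Nice γ V →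
      (∀ t ∈ Icc (0:ℝ) 1, η (s, t) = γ t) →
      ∀ m ≤ N, (fun j => J γ idx f j ((m:ℝ) / N)) = hol s m := by
    intro γ s hs hγ hsγ m
    induction m with
    | zero =>
      intro _
      funext j
      cases j <;> simp [hol0, J]
    | succ m ih =>
      intro hm
      have hm' : m ≤ N := by omega
      have a0 := hmem m hm'
      have a1 := hmem (m+1) hm
      rw [holS, ← ih hm', hsγ _ a0, hsγ _ a1]
      refine J_act hγ (fun t ht => hsγ t ht ▸ hX s hs t ht) hf hsep a0 a1 ?_
      intro u hu w hw
      have hu' := uIcc_subset_Icc a0 a1 hu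
      have hw' := uIcc_subset_Icc a0 a1 hw
      rw [← hsγ u hu', ← hsγ w hw']
      refine hd s hs s hs _ hu' _ hw' (hz _) ?_
      refine (abs_sub_le_of_uIcc_subset_uIcc (uIcc_subset_uIcc hw hu)).trans (hstep1 m)
  have eα := hJ α 0 (by simp) hα h0 N le_rfl
  have eβ := hJ β 1 (by simp) hβ h1 N le_rfl
  have e := hend N le_rfl
  rw [hNN] at eα eβ e
  rw [← eα, ← eβ] at e
  exact (congrFun e k).symm

/-! ### Measure theoretic input -/

lemma null_preimage (g : ℝ → ℝ) {Z : Set ℝ} (hZ : volume Z = 0) :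
    volume {t | (∃ d, d ≠ 0 ∧ HasDerivAt g d t) ∧ g t ∈ Z} = 0 := by
  set A : ℕ → ℤ → Set ℝ := fun m j => {t | g t ∈ Z ∧
    (∀ s, |s - t| < 1 / ((m:ℝ) + 1) → |s - t| ≤ ((m:ℝ) + 1) * |g s - g t|) ∧
    ⌊t * ((m:ℝ) + 1)⌋ = j} with hA
  have hcov : {t | (∃ d, d ≠ 0 ∧ HasDerivAt g d t) ∧ g t ∈ Z} ⊆ ⋃ m, ⋃ j, A m j := by
    rintro t ⟨⟨d, hd, hg⟩, hZt⟩
    have hd' : 0 < |d| / 2 := by positivity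
    have h1 := (hasDerivAt_iff_isLittleO.1 hg).def hd'
    rw [Metric.eventually_nhds_iff] at h1
    obtain ⟨ε, hε, h1⟩ := h1
    obtain ⟨m1, hm1⟩ := exists_nat_one_div_lt hε
    obtain ⟨m2, hm2⟩ := exists_nat_ge (2 / |d|)
    set m := max m1 m2
    have e1 : (m1:ℝ) ≤ m := by exact_mod_cast le_max_left m1 m2
    have e2 : (m2:ℝ) ≤ m := by exact_mod_cast le_max_right m1 m2
    refine mem_iUnion.2 ⟨m, mem_iUnion.2 ⟨_, hZt, fun s hs => ?_, rfl⟩⟩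
    have hs' : dist s t < ε := by
      rw [Real.dist_eq]
      refine hs.trans (lt_of_le_of_lt ?_ hm1)
      gcongr
    have h2 := h1 hs'
    simp only [Real.norm_eq_abs, smul_eq_mul] at h2
    have h3 : |s - t| * |d| ≤ |g s - g t| + |d| / 2 * |s - t| := by
      rw [← abs_mul]
      have : (s - t) * d = (g s - g t) - (g s - g t - (s - t) * d) := by ring
      rw [this]
      exact (abs_sub _ _).trans (add_le_add le_rfl h2)
    have h4 : 2 / |d| * (|d| / 2 * |s - t|) ≤ 2 / |d| * |g s - g t| := by
      gcongr
      linarith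
    have h5 : 2 / |d| * (|d| / 2 * |s - t|) = |s - t| := by
      field_simp
    rw [h5] at h4
    refine h4.trans ?_
    gcongr
    linarith
  refine measure_mono_null hcov (measure_iUnion_null fun m => measure_iUnion_null fun j => ?_)
  have hm : (0:ℝ) < (m:ℝ) + 1 := by positivity
  have hanti : ∀ s ∈ A m j, ∀ t ∈ A m j, |s - t| ≤ ((m:ℝ) + 1) * |g s - g t| := by
    rintro s ⟨-, -, hs⟩ t ⟨-, ht, ht'⟩
    refine ht s ?_
    have := Int.abs_sub_lt_one_of_floor_eq_floor (hs.trans ht'.symm)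
    rw [← sub_mul, abs_mul, abs_of_pos hm] at this
    rwa [lt_div_iff₀ hm]
  have hinj : InjOn g (A m j) := by
    intro s hs t ht hst
    have := hanti s hs t ht
    rw [hst, sub_self, abs_zero, mul_zero] at this
    exact sub_eq_zero.1 (abs_nonpos_iff.1 this)
  have hleft := hinj.leftInvOn_invFunOn
  have hlip : LipschitzOnWith (m + 1) (Function.invFunOn g (A m j)) (g '' A m j) := by
    refine LipschitzOnWith.of_dist_le_mul ?_
    rintro _ ⟨s, hs, rfl⟩ _ ⟨t, ht, rfl⟩
    rw [hleft hs, hleft ht, Real.dist_eq, Real.dist_eq]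
    simpa using hanti s hs t ht
  have h1 := hlip.hausdorffMeasure_image_le (d := 1) zero_le_one
  rw [hausdorffMeasure_real, hleft.image_image] at h1
  have h2 : volume (g '' A m j) = 0 := by
    refine measure_mono_null ?_ hZ
    rintro _ ⟨t, ht, rfl⟩
    exact ht.1
  rw [h2, mul_zero] at h1
  exact le_antisymm h1 bot_le

/-- The occupation measure of the `i`-th coordinate, weighted by speed. -/
def nu (γ : ℝ → Fin n → ℝ) (i : Fin n) : Measure ℝ :=
  Measure.map (fun t => γ (clamp t) i)
    ((volume.restrict (Icc (0:ℝ) 1)).withDensity (fun t => ‖pathDeriv γ i t‖ₑ))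

lemma continuous_clamp : Continuous clamp := by unfold clamp; fun_prop

section
variable {γ : ℝ → Fin n → ℝ} {V : ℝ}

lemma Nice.clamp_meas (h : Nice γ V) (i : Fin n) : Measurable (fun t => γ (clamp t) i) := by
  refine Continuous.measurable ?_
  exact (continuousOn_pi.1 h.2.1 i).comp_continuous continuous_clamp clamp_mem

lemma Nice.lintegral_deriv (h : Nice γ V) (i : Fin n) :
    ∫⁻ t in Icc (0:ℝ) 1, ‖pathDeriv γ i t‖ₑ ≤ ENNReal.ofReal V := by
  have : ∫⁻ t in Icc (0:ℝ) 1, ‖pathDeriv γ i t‖ₑ ≤ ∫⁻ t in Icc (0:ℝ) 1, ENNReal.ofReal V := by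
    refine lintegral_mono_ae ?_
    filter_upwards [h.ae_bound i] with t ht
    rw [← ofReal_norm_eq_enorm]
    exact ENNReal.ofReal_le_ofReal ht.2
  simpa using this

lemma Nice.nu_finite (h : Nice γ V) (i : Fin n) : IsFiniteMeasure (nu γ i) := by
  have := isFiniteMeasure_withDensity (μ := volume.restrict (Icc (0:ℝ) 1))
    (f := fun t => ‖pathDeriv γ i t‖ₑ) ((h.lintegral_deriv i).trans_lt ENNReal.ofReal_lt_top).ne
  unfold nu
  infer_instance

lemma Nice.lintegral_nu (h : Nice γ V) (i : Fin n) {u : ℝ → ℝ} (hu : Continuous u) :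
    ∫⁻ x, ‖u x‖ₑ ∂(nu γ i) = ∫⁻ s in Icc (0:ℝ) 1, ‖u (γ s i)‖ₑ * ‖pathDeriv γ i s‖ₑ := by
  unfold nu
  rw [lintegral_map hu.measurable.enorm (h.clamp_meas i),
    lintegral_withDensity_eq_lintegral_mul _ (measurable_pathDeriv γ i).enorm
      (g := fun a => ‖u (γ (clamp a) i)‖ₑ) (hu.measurable.comp (h.clamp_meas i)).enorm]
  refine setLIntegral_congr_fun measurableSet_Icc fun s hs => ?_
  simp only [Pi.mul_apply, clamp_of_mem hs]
  rw [mul_comm]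

lemma Nice.nu_ac (h : Nice γ V) (i : Fin n) : nu γ i ≪ volume := by
  refine Measure.AbsolutelyContinuous.mk fun Z hZm hZ => ?_
  have hm := h.clamp_meas i hZm
  rw [nu, Measure.map_apply (h.clamp_meas i) hZm, withDensity_apply _ hm,
    lintegral_eq_zero_iff (measurable_pathDeriv γ i).enorm, Filter.EventuallyEq,
    ae_restrict_iff' hm]
  have hn := null_preimage (fun t => γ t i) hZ
  have hn' : ∀ᵐ t ∂(volume.restrict (Icc (0:ℝ) 1)),
    ¬ ((∃ d, d ≠ 0 ∧ HasDerivAt (fun t => γ t i) d t) ∧ γ t i ∈ Z) :=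
    ae_restrict_of_ae (measure_eq_zero_iff_ae_notMem.1 hn)
  filter_upwards [hn', h.ae_bound i, ae_restrict_mem measurableSet_Icc] with t h1 h2 h3 h4
  simp only [mem_preimage, clamp_of_mem h3] at h4
  by_contra hne
  refine h1 ⟨⟨_, ?_, h2.1⟩, h4⟩
  simpa using hne

/-- The planar projections of a nice curve are null sets. -/
lemma Nice.plane_null (h : Nice γ V) (i i' : Fin n) :
    volume ((fun t => (γ t i, γ t i')) '' Icc (0:ℝ) 1) = 0 := by
  have hl : LipschitzOnWith V.toNNReal (fun t => (γ t i, γ t i')) (Icc (0:ℝ) 1) := by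
    refine LipschitzOnWith.of_dist_le_mul fun s hs t ht => ?_
    rw [Prod.dist_eq, Real.coe_toNNReal _ h.1]
    exact max_le (h.lip i ht hs) (h.lip i' ht hs)
  have h1 := hl.dimH_image_le
  have h2 : dimH ((fun t => (γ t i, γ t i')) '' Icc (0:ℝ) 1) < ((2:NNReal) : ENNReal) := by
    refine (h1.trans ((dimH_mono (subset_univ _)).trans_eq Real.dimH_univ)).trans_lt ?_
    norm_num
  have h3 := hausdorffMeasure_of_dimH_lt h2
  rw [← hausdorffMeasure_prod_real]
  exact_mod_cast h3

end

/-- Continuous functions with values in `[0,1]`. -/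
def Cls (u : ℝ → ℝ) : Prop := Continuous u ∧ ∀ x, 0 ≤ u x ∧ u x ≤ 1

def tent (R ε : ℝ) (m : ℕ) (x : ℝ) : ℝ :=
  clamp ((x + R) / ε + 1 - m) - clamp ((x + R) / ε + 1 - (m + 1 : ℕ))

lemma clamp_mono : Monotone clamp := fun _ _ h => max_le_max le_rfl (min_le_min le_rfl h)

lemma tent_cls (R ε : ℝ) (m : ℕ) : Cls (tent R ε m) := by
  refine ⟨?_, fun x => ?_⟩
  · unfold tent
    have := continuous_clamp
    fun_prop
  · have h1 := clamp_mem ((x + R) / ε + 1 - m)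
    have h2 := clamp_mem ((x + R) / ε + 1 - (m + 1 : ℕ))
    have h3 : clamp ((x + R) / ε + 1 - (m + 1 : ℕ)) ≤ clamp ((x + R) / ε + 1 - m) :=
      clamp_mono (by push_cast; linarith)
    unfold tent
    exact ⟨by linarith, by linarith [h1.2, h2.1]⟩

lemma tent_sum (R ε : ℝ) (N : ℕ) (x : ℝ) : ∑ m ∈ Finset.range N, tent R ε m x =
    clamp ((x + R) / ε + 1) - clamp ((x + R) / ε + 1 - N) := by
  unfold tent
  rw [Finset.sum_range_sub' (fun m : ℕ => clamp ((x + R) / ε + 1 - m))]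
  simp

lemma clamp_ge_one {u : ℝ} (h : 1 ≤ u) : clamp u = 1 := by
  rw [clamp, min_eq_left h, max_eq_right zero_le_one]

lemma clamp_le_zero {u : ℝ} (h : u ≤ 0) : clamp u = 0 := by
  rw [clamp, max_eq_left ((min_le_right _ _).trans h)]

lemma tent_supp {R ε : ℝ} (hε : 0 < ε) {m : ℕ} {a x : ℝ} (ha : tent R ε m a ≠ 0)
    (hx : tent R ε m x ≠ 0) : |x - a| < 2 * ε := by
  have key : ∀ y, tent R ε m y ≠ 0 → (m - 1 : ℝ) * ε < y + R ∧ y + R < (m + 1) * ε := by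
    intro y hy
    constructor
    · by_contra hcon
      push Not at hcon
      apply hy
      have : (y + R) / ε ≤ m - 1 := by rwa [div_le_iff₀ hε]
      unfold tent
      rw [clamp_le_zero (by linarith), clamp_le_zero (by push_cast; linarith), sub_zero]
    · by_contra hcon
      push Not at hcon
      apply hy
      have : (m + 1 : ℝ) ≤ (y + R) / ε := by rwa [le_div_iff₀ hε]
      unfold tent
      rw [clamp_ge_one (by linarith), clamp_ge_one (by push_cast; linarith), sub_self]
  have h1 := key a ha
  have h2 := key x hx
  rw [abs_lt]
  constructor <;> linarith [h1.1, h1.2, h2.1, h2.2]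

/-- A "bimeasure" controlled by a product measure and vanishing off a null set vanishes. -/
lemma two_d {Y : Set (ℝ × ℝ)} (hY : IsCompact Y) {ν₁ ν₂ : Measure ℝ} [IsFiniteMeasure ν₁]
    [IsFiniteMeasure ν₂] (h0 : (ν₁.prod ν₂) Y = 0) (R : ℝ) (B : (ℝ → ℝ) → (ℝ → ℝ) → ℝ)
    (C : ENNReal) (hC : C ≠ ⊤)
    (hl : ∀ (N : ℕ) (ψ : ℕ → ℝ → ℝ), (∀ m, Cls (ψ m)) →
      (∀ x, |x| ≤ R → ∑ m ∈ Finset.range N, ψ m x = 1) → ∀ v, Cls v →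
      B (fun _ => 1) v = ∑ m ∈ Finset.range N, B (ψ m) v)
    (hr : ∀ (N : ℕ) (ψ : ℕ → ℝ → ℝ), (∀ m, Cls (ψ m)) →
      (∀ x, |x| ≤ R → ∑ m ∈ Finset.range N, ψ m x = 1) → ∀ u, Cls u →
      B u (fun _ => 1) = ∑ m ∈ Finset.range N, B u (ψ m))
    (hb : ∀ u v, Cls u → Cls v →
      ‖B u v‖ₑ ≤ C * ((∫⁻ x, ‖u x‖ₑ ∂ν₁) * ∫⁻ x, ‖v x‖ₑ ∂ν₂))
    (hz : ∀ u v, Cls u → Cls v → ∀ δ > 0,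
      (∀ y ∈ Y, ∀ a b, |a - y.1| < δ → |b - y.2| < δ → u a * v b = 0) → B u v = 0) :
    B (fun _ => 1) (fun _ => 1) = 0 := by
  have hone : Cls (fun _ => 1) := ⟨continuous_const, fun _ => ⟨zero_le_one, le_rfl⟩⟩
  have key : ∀ ε : ℝ, 0 < ε → ‖B (fun _ => 1) (fun _ => 1)‖ₑ ≤
      C * (ν₁.prod ν₂) (Metric.cthickening (3 * ε) Y) := by
    intro ε hε
    obtain ⟨N, hN⟩ := exists_nat_ge (2 * R / ε + 1)
    have hψ := tent_cls R ε
    have hsum : ∀ x, |x| ≤ R → ∑ m ∈ Finset.range N, tent R ε m x = 1 := by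
      intro x hx
      rw [abs_le] at hx
      rw [tent_sum, clamp_ge_one, clamp_le_zero, sub_zero]
      · have : (x + R) / ε ≤ 2 * R / ε := by
          gcongr
          linarith
        linarith
      · have : 0 ≤ (x + R) / ε := div_nonneg (by linarith) hε.le
        linarith
    set T := Metric.cthickening (3 * ε) Y with hT
    have hTm : MeasurableSet T := Metric.isClosed_cthickening.measurableSet
    have hterm : ∀ m m', ‖B (tent R ε m) (tent R ε m')‖ₑ ≤
        C * ∫⁻ z in T, ‖tent R ε m z.1‖ₑ * ‖tent R ε m' z.2‖ₑ ∂(ν₁.prod ν₂) := by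
      intro m m'
      by_cases hbad : ∀ y ∈ Y, ∀ a b, |a - y.1| < ε → |b - y.2| < ε →
          tent R ε m a * tent R ε m' b = 0
      · rw [hz _ _ (hψ m) (hψ m') ε hε hbad]; simp
      · push Not at hbad
        obtain ⟨y, hy, a, b, ha, hb', hne⟩ := hbad
        refine (hb _ _ (hψ m) (hψ m')).trans ?_
        rw [← lintegral_prod_mul (hψ m).1.measurable.enorm.aemeasurable
          (hψ m').1.measurable.enorm.aemeasurable]
        gcongr C * ?_
        rw [← lintegral_indicator hTm]
        refine lintegral_mono fun z => ?_
        by_cases hzT : z ∈ T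
        · rw [indicator_of_mem hzT]
        · rw [indicator_of_notMem hzT]
          have : tent R ε m z.1 = 0 ∨ tent R ε m' z.2 = 0 := by
            by_contra hcon
            push Not at hcon
            apply hzT
            have k1 := tent_supp hε (left_ne_zero_of_mul hne) hcon.1
            have k2 := tent_supp hε (right_ne_zero_of_mul hne) hcon.2
            refine Metric.mem_cthickening_of_dist_le z y _ _ hy ?_
            rw [Prod.dist_eq, Real.dist_eq, Real.dist_eq]
            refine max_le ?_ ?_
            · linarith [abs_sub_le z.1 a y.1]
            · linarith [abs_sub_le z.2 b y.2]
          rcases this with h | h <;> simp [h]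
    have e : B (fun _ => 1) (fun _ => 1) = ∑ m ∈ Finset.range N, ∑ m' ∈ Finset.range N,
        B (tent R ε m) (tent R ε m') := by
      rw [hl N _ hψ hsum _ hone]
      exact Finset.sum_congr rfl fun m _ => hr N _ hψ hsum _ (hψ m)
    have hsle : ∀ x, ∑ m ∈ Finset.range N, ‖tent R ε m x‖ₑ ≤ 1 := by
      intro x
      have : ∀ m, ‖tent R ε m x‖ₑ = ENNReal.ofReal (tent R ε m x) := fun m =>
        Real.enorm_eq_ofReal ((hψ m).2 x).1
      simp only [this]
      rw [← ENNReal.ofReal_sum_of_nonneg (fun m _ => ((hψ m).2 x).1), tent_sum,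
        ENNReal.ofReal_le_one]
      linarith [(clamp_mem ((x + R) / ε + 1)).2, (clamp_mem ((x + R) / ε + 1 - N)).1]
    have hmeas : ∀ m m', Measurable (fun z : ℝ × ℝ => ‖tent R ε m z.1‖ₑ * ‖tent R ε m' z.2‖ₑ) :=
      fun m m' => (((hψ m).1.comp continuous_fst).measurable.enorm).mul
        (((hψ m').1.comp continuous_snd).measurable.enorm)
    rw [e]
    calc _ ≤ ∑ m ∈ Finset.range N, ∑ m' ∈ Finset.range N, ‖B (tent R ε m) (tent R ε m')‖ₑ :=
          (enorm_sum_le _ _).trans (Finset.sum_le_sum fun m _ => enorm_sum_le _ _)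
      _ ≤ ∑ m ∈ Finset.range N, ∑ m' ∈ Finset.range N,
          C * ∫⁻ z in T, ‖tent R ε m z.1‖ₑ * ‖tent R ε m' z.2‖ₑ ∂(ν₁.prod ν₂) :=
          Finset.sum_le_sum fun m _ => Finset.sum_le_sum fun m' _ => hterm m m'
      _ = C * ∫⁻ z in T, ∑ m ∈ Finset.range N, ∑ m' ∈ Finset.range N,
          ‖tent R ε m z.1‖ₑ * ‖tent R ε m' z.2‖ₑ ∂(ν₁.prod ν₂) := by
          rw [lintegral_finsetSum _ (fun m _ => Finset.measurable_fun_sum _ fun m' _ => hmeas m m'),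
            Finset.mul_sum]
          refine Finset.sum_congr rfl fun m _ => ?_
          rw [lintegral_finsetSum _ (fun m' _ => hmeas m m'), Finset.mul_sum]
      _ ≤ C * ∫⁻ z in T, 1 ∂(ν₁.prod ν₂) := by
          gcongr with z
          rw [← Finset.sum_mul_sum]
          exact mul_le_one' (hsle _) (hsle _)
      _ = _ := by simp
  have hlim : Filter.Tendsto (fun ε : ℝ => C * (ν₁.prod ν₂) (Metric.cthickening (3 * ε) Y))
      (𝓝[>] 0) (𝓝 0) := by
    have h1 := tendsto_measure_cthickening_of_isCompact (μ := ν₁.prod ν₂) hY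
    rw [h0] at h1
    have h2 : Filter.Tendsto (fun ε : ℝ => 3 * ε) (𝓝[>] 0) (𝓝 0) := by
      have : Filter.Tendsto (fun ε : ℝ => 3 * ε) (𝓝 0) (𝓝 (3 * 0)) :=
        (continuous_const.mul continuous_id).tendsto 0
      rw [mul_zero] at this
      exact this.mono_left nhdsWithin_le_nhds
    have h3 := ENNReal.Tendsto.const_mul (a := C) (h1.comp h2) (Or.inr hC)
    simpa using h3
  have := ge_of_tendsto hlim (b := ‖B (fun _ => 1) (fun _ => 1)‖ₑ) (by
    filter_upwards [self_mem_nhdsWithin] with ε hε using key ε hε)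
  simpa using this

/-! ### Thin homotopies preserve iterated integrals -/

lemma chenS_eq_J (γ : ℝ → Fin n → ℝ) (i0 : Fin n) (L : List (Fin n)) :
    ∀ idx : ℕ → Fin n, (∀ j < L.length, idx j = L.reverse.getD j i0) →
    ∀ t, chenS γ L t = J γ idx (fun _ _ => 1) L.length t := by
  induction L with
  | nil => intro idx _ t; rfl
  | cons i L ih =>
    intro idx h t
    have h1 : idx L.length = i := by
      rw [h L.length (by simp), List.reverse_cons, List.getD_append_right _ _ _ _ (by simp)]
      simp
    have h2 := ih idx (fun j hj => by
      rw [h j (by simp; omega), List.reverse_cons, List.getD_append _ _ _ _ (by simpa using hj)])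
    simp only [chenS, List.length_cons, J, h1, mul_one]
    refine intervalIntegral.integral_congr fun s _ => ?_
    simp only [h2 s]

lemma Cls.mul {u v : ℝ → ℝ} (hu : Cls u) (hv : Cls v) : Cls (fun x => u x * v x) :=
  ⟨hu.1.mul hv.1, fun x => ⟨mul_nonneg (hu.2 x).1 (hv.2 x).1,
    mul_le_one₀ (hu.2 x).2 (hv.2 x).1 (hv.2 x).2⟩⟩

lemma Cls.enorm_le {u : ℝ → ℝ} (hu : Cls u) (x : ℝ) : ‖u x‖ₑ ≤ 1 := by
  rw [Real.enorm_eq_ofReal (hu.2 x).1, ENNReal.ofReal_le_one]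
  exact (hu.2 x).2

/-- Modify two adjacent weights. -/
def mod2 (f : ℕ → ℝ → ℝ) (q : ℕ) (u v : ℝ → ℝ) : ℕ → ℝ → ℝ :=
  Function.update (Function.update f q (fun x => f q x * u x)) (q + 1) (fun x => f (q + 1) x * v x)

lemma mod2_q (f : ℕ → ℝ → ℝ) (q : ℕ) (u v : ℝ → ℝ) :
    mod2 f q u v q = fun x => f q x * u x := by
  rw [mod2, Function.update_of_ne (by omega), Function.update_self]

lemma mod2_q1 (f : ℕ → ℝ → ℝ) (q : ℕ) (u v : ℝ → ℝ) :
    mod2 f q u v (q + 1) = fun x => f (q + 1) x * v x := by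
  rw [mod2, Function.update_self]

lemma mod2_other (f : ℕ → ℝ → ℝ) (q : ℕ) (u v : ℝ → ℝ) {j : ℕ} (h : j ≠ q) (h' : j ≠ q + 1) :
    mod2 f q u v j = f j := by
  rw [mod2, Function.update_of_ne h', Function.update_of_ne h]

lemma mod2_one (f : ℕ → ℝ → ℝ) (q : ℕ) : mod2 f q (fun _ => 1) (fun _ => 1) = f := by
  funext j
  by_cases h : j = q
  · subst h; rw [mod2_q]; simp
  by_cases h' : j = q + 1
  · subst h'; rw [mod2_q1]; simp
  rw [mod2_other f q _ _ h h']

lemma mod2_cls {f : ℕ → ℝ → ℝ} (hf : ∀ j, Cls (f j)) (q : ℕ) {u v : ℝ → ℝ} (hu : Cls u)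
    (hv : Cls v) (j : ℕ) : Cls (mod2 f q u v j) := by
  by_cases h : j = q
  · subst h; rw [mod2_q]; exact (hf j).mul hu
  by_cases h' : j = q + 1
  · subst h'; rw [mod2_q1]; exact (hf _).mul hv
  rw [mod2_other f q _ _ h h']; exact hf j

lemma J_mod2_bound {γ : ℝ → Fin n → ℝ} {V : ℝ} (h : Nice γ V) (idx : ℕ → Fin n)
    {f : ℕ → ℝ → ℝ} (hf : ∀ j, Cls (f j)) {q k : ℕ} (hqk : q + 1 < k) {u v : ℝ → ℝ}
    (hu : Cls u) (hv : Cls v) :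
    ‖J γ idx (mod2 f q u v) k 1‖ₑ ≤
      (∏ _j ∈ ((Finset.range k).erase q).erase (q + 1), ENNReal.ofReal V) *
        ((∫⁻ x, ‖u x‖ₑ ∂(nu γ (idx q))) * ∫⁻ x, ‖v x‖ₑ ∂(nu γ (idx (q + 1)))) := by
  have hF := mod2_cls hf q hu hv
  refine (J_enorm h (fun j => (hF j).1) 1 (by simp)).trans ?_
  rw [h.lintegral_nu _ hu.1, h.lintegral_nu _ hv.1]
  rw [← Finset.mul_prod_erase (Finset.range k) _ (a := q) (by simp; omega),
    ← Finset.mul_prod_erase ((Finset.range k).erase q) _ (a := q + 1) (by simp; omega)]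
  rw [← mul_assoc, mul_comm]
  gcongr with j hj s s
  · refine (lintegral_mono fun s => ?_).trans (h.lintegral_deriv (idx j))
    exact mul_le_of_le_one_left' ((hF j).enorm_le _)
  · rw [mod2_q, enorm_mul]
    exact mul_le_of_le_one_left' ((hf q).enorm_le _)
  · rw [mod2_q1, enorm_mul]
    exact mul_le_of_le_one_left' ((hf (q+1)).enorm_le _)

lemma J_mod2_left {γ : ℝ → Fin n → ℝ} {V R : ℝ} (h : Nice γ V) (idx : ℕ → Fin n)
    (hR : ∀ t ∈ Icc (0:ℝ) 1, ∀ i, |γ t i| ≤ R)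
    {f : ℕ → ℝ → ℝ} (hf : ∀ j, Cls (f j)) {q k : ℕ} (hqk : q + 1 < k) (N : ℕ) (ψ : ℕ → ℝ → ℝ)
    (hψ : ∀ m, Cls (ψ m)) (hs : ∀ x, |x| ≤ R → ∑ m ∈ Finset.range N, ψ m x = 1)
    {v : ℝ → ℝ} (hv : Cls v) :
    J γ idx (mod2 f q (fun _ => 1) v) k 1 =
      ∑ m ∈ Finset.range N, J γ idx (mod2 f q (ψ m) v) k 1 := by
  have hne : q ≠ q + 1 := by omega
  have e : ∀ u, mod2 f q u v = Function.update (Function.update f (q + 1)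
      (fun x => f (q + 1) x * v x)) q (fun x => f q x * u x) := by
    intro u
    rw [mod2, Function.update_comm hne]
  simp only [e]
  refine J_sum (γ := γ) (idx := idx) h ?_ N (fun m x => f q x * ψ m x)
    (fun m => (hf q).1.mul (hψ m).1) _ ?_ (by omega) 1 (by simp)
  · intro j
    by_cases hj : j = q + 1
    · subst hj; rw [Function.update_self]; exact (hf _).1.mul hv.1
    · rw [Function.update_of_ne hj]; exact (hf j).1
  · intro s hs'
    rw [← Finset.mul_sum, hs _ (hR s hs' _)]

lemma J_mod2_right {γ : ℝ → Fin n → ℝ} {V R : ℝ} (h : Nice γ V) (idx : ℕ → Fin n)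
    (hR : ∀ t ∈ Icc (0:ℝ) 1, ∀ i, |γ t i| ≤ R)
    {f : ℕ → ℝ → ℝ} (hf : ∀ j, Cls (f j)) {q k : ℕ} (hqk : q + 1 < k) (N : ℕ) (ψ : ℕ → ℝ → ℝ)
    (hψ : ∀ m, Cls (ψ m)) (hs : ∀ x, |x| ≤ R → ∑ m ∈ Finset.range N, ψ m x = 1)
    {u : ℝ → ℝ} (hu : Cls u) :
    J γ idx (mod2 f q u (fun _ => 1)) k 1 =
      ∑ m ∈ Finset.range N, J γ idx (mod2 f q u (ψ m)) k 1 := by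
  simp only [mod2]
  refine J_sum (γ := γ) (idx := idx) h ?_ N (fun m x => f (q + 1) x * ψ m x)
    (fun m => (hf (q + 1)).1.mul (hψ m).1) _ ?_ (by omega) 1 (by simp)
  · intro j
    by_cases hj : j = q
    · subst hj; rw [Function.update_self]; exact (hf _).1.mul hu.1
    · rw [Function.update_of_ne hj]; exact (hf j).1
  · intro s hs'
    rw [← Finset.mul_sum, hs _ (hR s hs' _)]

lemma freeing {p : Fin n → ℝ} {α β : ℝ → Fin n → ℝ} {V : ℝ} (hα : Nice α V) (hβ : Nice β V)
    {η : ℝ × ℝ → Fin n → ℝ} (hη : IsThinHomotopy p α β η) (idx : ℕ → Fin n) (k q : ℕ) :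
    ∀ f : ℕ → ℝ → ℝ, (∀ j, Cls (f j)) →
      (∃ δ > 0, ∀ j, q ≤ j → j + 1 < k →
        Sep (α '' Icc 0 1 ∪ β '' Icc 0 1) δ (idx j) (idx (j + 1)) (f j) (f (j + 1))) →
      J α idx f k 1 = J β idx f k 1 := by
  set X := α '' Icc (0:ℝ) 1 ∪ β '' Icc (0:ℝ) 1 with hX
  have hXc : IsCompact X := (isCompact_Icc.image_of_continuousOn hα.2.1).union
    (isCompact_Icc.image_of_continuousOn hβ.2.1)
  induction q with
  | zero =>
    rintro f hf ⟨δ, hδ, hsep⟩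
    set g : ℕ → ℝ → ℝ := fun j => if j < k then f j else fun _ => 0 with hg
    have hfg : ∀ j < k, f j = g j := fun j hj => by simp [hg, hj]
    rw [J_congr (γ := α) hfg, J_congr (γ := β) hfg]
    refine holonomy hα hβ hη hδ (fun j => ?_) (fun j => ?_) k
    · simp only [hg]; split_ifs
      exacts [(hf j).1, continuous_const]
    · by_cases hj : j + 1 < k
      · rw [← hfg j (by omega), ← hfg (j+1) hj]
        exact hsep j (Nat.zero_le _) hj
      · intro x _ a b _ _
        simp [hg, hj]
  | succ q ih =>
    rintro f hf ⟨δ, hδ, hsep⟩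
    by_cases hqk : q + 1 < k
    swap
    · exact ih f hf ⟨δ, hδ, fun j hj hj' => absurd hj' (by omega)⟩
    obtain ⟨R, hR⟩ := hXc.isBounded.exists_norm_le
    have hRα : ∀ t ∈ Icc (0:ℝ) 1, ∀ i, |α t i| ≤ R := fun t ht i =>
      (norm_le_pi_norm (α t) i).trans (hR _ (Or.inl ⟨t, ht, rfl⟩))
    have hRβ : ∀ t ∈ Icc (0:ℝ) 1, ∀ i, |β t i| ≤ R := fun t ht i =>
      (norm_le_pi_norm (β t) i).trans (hR _ (Or.inr ⟨t, ht, rfl⟩))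
    have := hα.nu_finite (idx q)
    have := hα.nu_finite (idx (q + 1))
    have := hβ.nu_finite (idx q)
    have := hβ.nu_finite (idx (q + 1))
    set C0 : ENNReal := ∏ _j ∈ ((Finset.range k).erase q).erase (q + 1), ENNReal.ofReal V with hC0
    set Y : Set (ℝ × ℝ) := (fun x : Fin n → ℝ => (x (idx q), x (idx (q + 1)))) '' X with hY
    have hYc : IsCompact Y := hXc.image (by fun_prop)
    have hY0 : volume Y = 0 := by
      rw [hY, hX, image_union, image_image, image_image]
      exact measure_union_null (hα.plane_null _ _) (hβ.plane_null _ _)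
    have hac : ((nu α (idx q) + nu β (idx q)).prod (nu α (idx (q+1)) + nu β (idx (q+1)))) Y = 0 := by
      have a1 : nu α (idx q) + nu β (idx q) ≪ volume :=
        (hα.nu_ac _).add_left (hβ.nu_ac _)
      have a2 : nu α (idx (q+1)) + nu β (idx (q+1)) ≪ volume :=
        (hα.nu_ac _).add_left (hβ.nu_ac _)
      refine (a1.prod a2) ?_
      rwa [← Measure.volume_eq_prod]
    have main := two_d hYc hac R
      (fun u v => J α idx (mod2 f q u v) k 1 - J β idx (mod2 f q u v) k 1) C0
      (ENNReal.prod_ne_top fun _ _ => ENNReal.ofReal_ne_top) ?_ ?_ ?_ ?_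
    · rw [mod2_one] at main
      exact sub_eq_zero.1 main
    · intro N ψ hψ hs v hv
      rw [J_mod2_left hα idx hRα hf hqk N ψ hψ hs hv, J_mod2_left hβ idx hRβ hf hqk N ψ hψ hs hv,
        Finset.sum_sub_distrib]
    · intro N ψ hψ hs u hu
      rw [J_mod2_right hα idx hRα hf hqk N ψ hψ hs hu, J_mod2_right hβ idx hRβ hf hqk N ψ hψ hs hu,
        Finset.sum_sub_distrib]
    · intro u v hu hv
      refine enorm_sub_le.trans ?_
      refine (add_le_add (J_mod2_bound hα idx hf hqk hu hv)
        (J_mod2_bound hβ idx hf hqk hu hv)).trans ?_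
      rw [lintegral_add_measure, lintegral_add_measure, ← hC0, ← mul_add]
      gcongr
      rw [add_mul, mul_add, mul_add]
      refine add_le_add le_self_add le_add_self
    · intro u v hu hv δ' hδ' huv
      refine sub_eq_zero.2 (ih (mod2 f q u v) (mod2_cls hf q hu hv)
        ⟨min δ δ', lt_min hδ hδ', fun j hj hjk x hx a b ha hb => ?_⟩)
      have ha1 := ha.trans_le (min_le_left _ _)
      have ha2 := ha.trans_le (min_le_right _ _)
      have hb1 := hb.trans_le (min_le_left _ _)
      have hb2 := hb.trans_le (min_le_right _ _)
      by_cases hjq : j = q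
      · subst hjq
        rw [mod2_q, mod2_q1]
        have := huv _ ⟨x, hx, rfl⟩ a b ha2 hb2
        dsimp only
        linear_combination f j a * f (j + 1) b * this
      by_cases hjq1 : j = q + 1
      · subst hjq1
        rw [mod2_q1, mod2_other f q u v (by omega) (by omega)]
        have := hsep _ le_rfl hjk x hx a b ha1 hb1
        dsimp only
        linear_combination v a * this
      · rw [mod2_other f q u v hjq hjq1, mod2_other f q u v (by omega) (by omega)]
        exact hsep j (by omega) hjk x hx a b ha1 hb1

lemma sig_of_thin {p : Fin n → ℝ} {α β : ℝ → Fin n → ℝ} (hα : PiecewiseSmooth α)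
    (hβ : PiecewiseSmooth β) {η : ℝ × ℝ → Fin n → ℝ} (hη : IsThinHomotopy p α β η)
    (l : List (Fin n)) : elemIterInt α l = elemIterInt β l := by
  obtain ⟨V, hV⟩ := nice_of_piecewiseSmooth hα
  obtain ⟨W, hW⟩ := nice_of_piecewiseSmooth hβ
  unfold elemIterInt
  cases l with
  | nil => rfl
  | cons i l =>
    set L := (i :: l).reverse
    rw [chenS_eq_J α i L (fun j => L.reverse.getD j i) (fun _ _ => rfl),
      chenS_eq_J β i L (fun j => L.reverse.getD j i) (fun _ _ => rfl)]
    exact freeing (hV.mono (le_max_left V W)) (hW.mono (le_max_right V W)) hη _ _ L.length _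
      (fun _ => ⟨continuous_const, fun _ => ⟨zero_le_one, le_rfl⟩⟩)
      ⟨1, one_pos, fun j h1 h2 => absurd h2 (by omega)⟩

/-- Two piecewise smooth loops in `ℝⁿ` based at `p` have equal
elementary iterated integrals (for all nonempty index sequences) if and only if they
are thin equivalent within the class of piecewise smooth loops based at `p`.
(Faithfulness of the Chen signature on piecewise smooth loops mod thin homotopy.) -/
theorem signature_faithful_thin {n : ℕ} (p : Fin n → ℝ) (α β : ℝ → (Fin n → ℝ))
    (hα : PiecewiseSmooth α) (hα0 : α 0 = p) (hα1 : α 1 = p)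
    (hβ : PiecewiseSmooth β) (hβ0 : β 0 = p) (hβ1 : β 1 = p) :
    (∀ l : List (Fin n), l ≠ [] → elemIterInt α l = elemIterInt β l) ↔
    ThinEquiv (fun γ => PiecewiseSmooth γ ∧ γ 0 = p ∧ γ 1 = p) p α β := by
  constructor
  · intro hl
    obtain ⟨V, hV⟩ := nice_of_piecewiseSmooth hα
    obtain ⟨W, hW⟩ := nice_of_piecewiseSmooth hβ
    refine Relation.EqvGen.rel _ _ ⟨⟨hα, hα0, hα1⟩, ⟨hβ, hβ0, hβ1⟩, ?_⟩
    refine thin_of_sig (hV.mono (le_max_left V W)) hα0 hα1 (hW.mono (le_max_right V W)) hβ0 hβ1 ?_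
    funext w
    by_cases hw : w = []
    · subst hw; rfl
    · have := hl w.reverse (by simpa using hw)
      simpa [elemIterInt, lift] using this
  · intro h l _
    clear hα hα0 hα1 hβ hβ0 hβ1
    induction h with
    | rel a b hab =>
      obtain ⟨⟨ha, -, -⟩, ⟨hb, -, -⟩, η, hη⟩ := hab
      exact sig_of_thin ha hb hη l
    | refl a => rfl
    | symm a b _ ih => exact ih.symm
    | trans a b c _ _ ih1 ih2 => exact ih1.trans ih2

end ChenPaper
end
end

section
/- Let γ:[0,1]→ℝⁿ be a piecewise smooth path and let (i₁,…,i_k) and (j₁,…,j_l) be index sequences in {1,…,n}. Then ∫_γ dx_{i₁}⋯dx_{i_k} · ∫_γ dx_{j₁}⋯dx_{j_l} = Σ_m ∫_γ dx_{m₁}⋯dx_{m_{k+l}}, where the sum (with multiplicity) runs over the C(k+l,k) sequences (m₁,…,m_{k+l}) obtained by interleaving (i₁,…,i_k) and (j₁,…,j_l) while preserving the relative order within each sequence. In particular, any product of finitely many elementary iterated integrals along γ is a linear combination of elementary iterated integrals along γ. -/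
open Set MeasureTheory intervalIntegral Topology
open scoped Manifold

noncomputable section

namespace ChenPaper

variable {E : Type*} [NormedAddCommGroup E] [NormedSpace ℝ E]

variable {n : ℕ}

/-- The shuffle attached to a subset `S ⊆ Fin p`: the position `t` receives the index `r`
if `t` is the `r`-th smallest element of `S` (`r < S.card`), and the index `S.card + r`
if `t` is the `r`-th smallest element of the complement of `S`. -/
def shuffPerm {p : ℕ} (S : Finset (Fin p)) (t : Fin p) : Fin p :=
  if h : t ∈ S then
    ⟨((S.orderIsoOfFin rfl).symm ⟨t, h⟩ : Fin S.card), by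
      have h1 : (((S.orderIsoOfFin rfl).symm ⟨t, h⟩ : Fin S.card) : ℕ) < S.card :=
        Fin.isLt _
      have h2 : S.card ≤ Fintype.card (Fin p) := S.card_le_univ
      simp only [Fintype.card_fin] at h2
      omega⟩
  else
    ⟨S.card + ((Sᶜ.orderIsoOfFin rfl).symm ⟨t, Finset.mem_compl.mpr h⟩ : Fin Sᶜ.card), by
      have h1 : (((Sᶜ.orderIsoOfFin rfl).symm ⟨t, Finset.mem_compl.mpr h⟩ :
          Fin Sᶜ.card) : ℕ) < Sᶜ.card := Fin.isLt _
      have h2 : S.card + Sᶜ.card = Fintype.card (Fin p) := S.card_add_card_compl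
      simp only [Fintype.card_fin] at h2
      omega⟩

/-! ### Analytic part -/

/-- The coordinate derivatives of a piecewise smooth path are integrable on `[0,1]`. -/
theorem pathDeriv_integrable {n : ℕ} {γ : ℝ → (Fin n → ℝ)} (hγ : PiecewiseSmooth γ) (i : Fin n) :
    IntervalIntegrable (pathDeriv γ i) volume 0 1 := by
  obtain ⟨k, s, ⟨h0, h1, hs⟩, hc⟩ := hγ
  let a : ℕ → ℝ := fun m => if h : m < k + 1 then s ⟨m, h⟩ else 0
  have ha0 : a 0 = 0 := by simp only [a]; rw [dif_pos (Nat.succ_pos k)]; exact h0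
  have hak : a k = 1 := by simp only [a]; rw [dif_pos (Nat.lt_succ_self k)]; exact h1
  rw [← ha0, ← hak]
  apply IntervalIntegrable.trans_iterate
  intro m hm
  have e1 : a m = s (Fin.castSucc ⟨m, hm⟩) := by
    simp only [a]; rw [dif_pos (by omega)]; rfl
  have e2 : a (m + 1) = s (Fin.succ ⟨m, hm⟩) := by
    simp only [a]; rw [dif_pos (by omega)]; rfl
  rw [e1, e2]
  have hlt : s (Fin.castSucc ⟨m, hm⟩) < s (Fin.succ ⟨m, hm⟩) := hs (Fin.castSucc_lt_succ)
  have hcm := hc ⟨m, hm⟩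
  generalize s (Fin.castSucc ⟨m, hm⟩) = x at *
  generalize s (Fin.succ ⟨m, hm⟩) = y at *
  have hci : ContDiffOn ℝ (⊤ : ℕ∞) (fun u => γ u i) (Icc x y) := contDiffOn_pi.1 hcm i
  have hcont := hci.continuousOn_derivWithin (uniqueDiffOn_Icc hlt) (by exact_mod_cast le_top)
  have hint : IntervalIntegrable (derivWithin (fun u => γ u i) (Icc x y)) volume x y := by
    apply ContinuousOn.intervalIntegrable
    rwa [uIcc_of_le hlt.le]
  refine hint.congr_uIoo ?_
  intro t ht
  rw [uIoo_of_le hlt.le] at ht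
  exact derivWithin_of_mem_nhds (Icc_mem_nhds ht.1 ht.2)

theorem chenS_continuousOn {n : ℕ} {γ : ℝ → (Fin n → ℝ)} (hγ : PiecewiseSmooth γ)
    (l : List (Fin n)) : ContinuousOn (chenS γ l) (uIcc 0 1) := by
  induction l with
  | nil => exact continuousOn_const
  | cons i l ih =>
    exact intervalIntegral.continuousOn_primitive_interval'
      ((pathDeriv_integrable hγ i).continuousOn_mul ih) left_mem_uIcc

theorem chenS_integrand {n : ℕ} {γ : ℝ → (Fin n → ℝ)} (hγ : PiecewiseSmooth γ)
    (i : Fin n) (l : List (Fin n)) {t : ℝ} (ht : t ∈ uIcc (0:ℝ) 1) :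
    IntervalIntegrable (fun s => chenS γ l s * pathDeriv γ i s) volume 0 t :=
  ((pathDeriv_integrable hγ i).continuousOn_mul (chenS_continuousOn hγ l)).mono_set
    (uIcc_subset_uIcc left_mem_uIcc ht)

/-- Product formula for primitives of integrable functions. -/
theorem primitive_mul {f g : ℝ → ℝ} {t : ℝ} (hf : IntervalIntegrable f volume 0 t)
    (hg : IntervalIntegrable g volume 0 t) :
    (∫ s in (0:ℝ)..t, f s) * (∫ s in (0:ℝ)..t, g s) =
      (∫ s in (0:ℝ)..t, f s * ∫ u in (0:ℝ)..s, g u) +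
      ∫ s in (0:ℝ)..t, (∫ u in (0:ℝ)..s, f u) * g s := by
  have hF := hf.absolutelyContinuousOnInterval_intervalIntegral (c := 0) left_mem_uIcc
  have hG := hg.absolutelyContinuousOnInterval_intervalIntegral (c := 0) left_mem_uIcc
  have key := hF.integral_deriv_mul_eq_sub hG
  rw [← intervalIntegral.integral_add (hf.mul_continuousOn hG.continuousOn)
    (hg.continuousOn_mul hF.continuousOn)]
  simp only [intervalIntegral.integral_same, mul_zero, sub_zero] at key
  rw [← key]
  apply intervalIntegral.integral_congr_ae
  filter_upwards [hf.ae_hasDerivAt_integral, hg.ae_hasDerivAt_integral] with x h1 h2 hx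
  have hx' := uIoc_subset_uIcc hx
  rw [(h1 hx' 0 left_mem_uIcc).deriv, (h2 hx' 0 left_mem_uIcc).deriv]

/-! ### Combinatorial part -/

/-- Letter at position `t` of the interleaving of `a` and `b` attached to `S`. -/
def letter {α : Type*} (a b : ℕ → α) (S : Finset ℕ) (t : ℕ) : α :=
  if t ∈ S then a ((Finset.range t).filter (· ∈ S)).card
  else b ((Finset.range t).filter (· ∉ S)).card

/-- The interleaving word of length `p`. -/
def word {α : Type*} (a b : ℕ → α) (S : Finset ℕ) (p : ℕ) : List α :=
  (List.range p).map (letter a b S)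

theorem word_succ {α : Type*} (a b : ℕ → α) (S : Finset ℕ) (p : ℕ) :
    (word a b S (p + 1)).reverse = letter a b S p :: (word a b S p).reverse := by
  simp [word, List.range_succ]

theorem word_insert {α : Type*} (a b : ℕ → α) (S : Finset ℕ) (p : ℕ) :
    word a b (insert p S) p = word a b S p := by
  unfold word
  apply List.map_congr_left
  intro t ht
  rw [List.mem_range] at ht
  have hm : ∀ s, s ≤ t → (s ∈ insert p S ↔ s ∈ S) := by
    intro s hs
    rw [Finset.mem_insert]
    constructor
    · rintro (h | h)
      · omega
      · exact h
    · exact Or.inr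
  unfold letter
  have e1 : (Finset.range t).filter (· ∈ insert p S) = (Finset.range t).filter (· ∈ S) :=
    Finset.filter_congr fun s hs => hm s (Finset.mem_range.1 hs).le
  have e2 : (Finset.range t).filter (· ∉ insert p S) = (Finset.range t).filter (· ∉ S) :=
    Finset.filter_congr fun s hs => not_congr (hm s (Finset.mem_range.1 hs).le)
  rw [e1, e2]
  simp only [hm t le_rfl]

/-- Sum over all interleavings (reversed words). -/
def shSum {α : Type*} (a b : ℕ → α) (f : List α → ℝ) (k p : ℕ) : ℝ :=
  ∑ S ∈ Finset.powersetCard k (Finset.range p), f (word a b S p).reverse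

theorem shSum_zero {α : Type*} (a b : ℕ → α) (f : List α → ℝ) (p : ℕ) :
    shSum a b f 0 p = f ((List.range p).map b).reverse := by
  simp only [shSum, Finset.powersetCard_zero, Finset.sum_singleton]
  congr 2
  apply List.map_congr_left
  intro t _
  simp [letter]

theorem shSum_self {α : Type*} (a b : ℕ → α) (f : List α → ℝ) (p : ℕ) :
    shSum a b f p p = f ((List.range p).map a).reverse := by
  have h : Finset.powersetCard p (Finset.range p) = {Finset.range p} := by
    conv_lhs => rw [← Finset.card_range p]
    rw [Finset.card_range]
    have := Finset.powersetCard_self (Finset.range p)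
    rwa [Finset.card_range] at this
  rw [shSum, h, Finset.sum_singleton]
  congr 2
  apply List.map_congr_left
  intro t ht
  rw [List.mem_range] at ht
  have e : (Finset.range t).filter (· ∈ Finset.range p) = Finset.range t := by
    apply Finset.filter_true_of_mem
    intro s hs
    rw [Finset.mem_range] at hs ⊢
    omega
  rw [letter, if_pos (Finset.mem_range.2 ht), e, Finset.card_range]

theorem shSum_succ {α : Type*} (a b : ℕ → α) (f : List α → ℝ) (k p : ℕ) :
    shSum a b f (k + 1) (p + 1) =
      shSum a b (fun w => f (b (p - (k + 1)) :: w)) (k + 1) p +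
      shSum a b (fun w => f (a k :: w)) k p := by
  have hp : p ∉ Finset.range p := Finset.notMem_range_self
  have hnot : ∀ j, ∀ S ∈ Finset.powersetCard j (Finset.range p), p ∉ S := fun j S hS h =>
    hp ((Finset.mem_powersetCard.1 hS).1 h)
  have hfil : ∀ j, ∀ S ∈ Finset.powersetCard j (Finset.range p),
      (Finset.range p).filter (· ∈ S) = S := by
    intro j S hS
    rw [Finset.filter_mem_eq_inter]
    exact Finset.inter_eq_right.2 (Finset.mem_powersetCard.1 hS).1
  have hinj : Set.InjOn (insert p : Finset ℕ → Finset ℕ)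
      (Finset.powersetCard k (Finset.range p)) := by
    intro S hS T hT h
    have := congrArg (fun U => Finset.erase U p) h
    simpa [Finset.erase_insert (hnot k S hS), Finset.erase_insert (hnot k T hT)] using this
  unfold shSum
  rw [Finset.range_add_one, Finset.powersetCard_succ_insert hp, Finset.sum_union]
  · congr 1
    · apply Finset.sum_congr rfl
      intro S hS
      have hc : ((Finset.range p).filter (· ∉ S)).card = p - (k + 1) := by
        have h1 := Finset.card_filter_add_card_filter_not (s := Finset.range p) (· ∈ S)
        rw [hfil _ S hS, (Finset.mem_powersetCard.1 hS).2, Finset.card_range] at h1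
        omega
      rw [word_succ, letter, if_neg (hnot _ S hS), hc]
    · rw [Finset.sum_image hinj]
      apply Finset.sum_congr rfl
      intro S hS
      have hc : ((Finset.range p).filter (· ∈ insert p S)).card = k := by
        have : (Finset.range p).filter (· ∈ insert p S) = (Finset.range p).filter (· ∈ S) := by
          apply Finset.filter_congr
          intro s hs
          have := Finset.mem_range.1 hs
          rw [Finset.mem_insert]
          constructor
          · rintro (h | h)
            · omega
            · exact h
          · exact Or.inr
        rw [this, hfil _ S hS, (Finset.mem_powersetCard.1 hS).2]
      rw [word_succ, word_insert, letter, if_pos (Finset.mem_insert_self p S), hc]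
  · rw [Finset.disjoint_left]
    intro S hS hS'
    obtain ⟨T, _, rfl⟩ := Finset.mem_image.1 hS'
    exact hnot _ _ hS (Finset.mem_insert_self p T)

/-- Shuffle identity, in terms of `shSum`. -/
theorem chenS_mul {n : ℕ} {γ : ℝ → (Fin n → ℝ)} (hγ : PiecewiseSmooth γ) (a b : ℕ → Fin n)
    (p : ℕ) : ∀ k l : ℕ, k + l = p → ∀ t ∈ uIcc (0:ℝ) 1,
      chenS γ ((List.range k).map a).reverse t * chenS γ ((List.range l).map b).reverse t =
        shSum a b (fun w => chenS γ w t) k p := by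
  induction p with
  | zero =>
    intro k l h t _
    obtain ⟨rfl, rfl⟩ : k = 0 ∧ l = 0 := by omega
    rw [shSum_zero]
    simp [chenS]
  | succ p ih =>
    intro k l h t ht
    rcases k with _ | k
    · obtain rfl : l = p + 1 := by omega
      rw [shSum_zero]
      simp [chenS]
    rcases l with _ | l
    · obtain rfl : k = p := by omega
      rw [shSum_self]
      simp [chenS]
    have ih1 := ih k (l + 1) (by omega)
    have ih2 := ih (k + 1) l (by omega)
    have hl : p - (k + 1) = l := by omega
    rw [shSum_succ, hl]
    have ea : ((List.range (k + 1)).map a).reverse = a k :: ((List.range k).map a).reverse := by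
      simp [List.range_succ]
    have eb : ((List.range (l + 1)).map b).reverse = b l :: ((List.range l).map b).reverse := by
      simp [List.range_succ]
    rw [eb] at ih1
    rw [ea] at ih2
    rw [ea, eb]
    generalize ((List.range k).map a).reverse = u at *
    generalize ((List.range l).map b).reverse = v at *
    have hsub : ∀ s ∈ uIcc (0:ℝ) t, s ∈ uIcc (0:ℝ) 1 := fun s hs =>
      uIcc_subset_uIcc left_mem_uIcc ht hs
    have key := primitive_mul (chenS_integrand hγ (a k) u ht) (chenS_integrand hγ (b l) v ht)
    have swap : ∀ (c : Fin n) (j : ℕ),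
        shSum a b (fun w => chenS γ (c :: w) t) j p =
          ∫ s in (0:ℝ)..t, shSum a b (fun w => chenS γ w s) j p * pathDeriv γ c s := by
      intro c j
      simp only [shSum, Finset.sum_mul]
      rw [intervalIntegral.integral_finset_sum]
      · rfl
      · intro S _
        exact chenS_integrand hγ c _ ht
    rw [swap, swap]
    refine key.trans ?_
    rw [add_comm]
    congr 1
    · apply intervalIntegral.integral_congr
      intro s hs
      simp only
      rw [← ih2 s (hsub s hs)]
      change chenS γ (a k :: u) s * (chenS γ v s * pathDeriv γ (b l) s) = _
      ring
    · apply intervalIntegral.integral_congr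
      intro s hs
      simp only
      rw [← ih1 s (hsub s hs)]
      change chenS γ u s * pathDeriv γ (a k) s * chenS γ (b l :: v) s = _
      ring

/-- The rank of an element is the number of smaller elements. -/
theorem rank_eq {p : ℕ} (S : Finset (Fin p)) (t : Fin p) (h : t ∈ S) :
    (((S.orderIsoOfFin rfl).symm ⟨t, h⟩ : Fin S.card) : ℕ) = (S.filter (· < t)).card := by
  set r := (S.orderIsoOfFin rfl).symm ⟨t, h⟩ with hr
  have hrt : S.orderEmbOfFin rfl r = t := by
    rw [← Finset.coe_orderIsoOfFin_apply, hr, OrderIso.apply_symm_apply]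
  have : S.filter (· < t) = (Finset.Iio r).map (S.orderEmbOfFin rfl).toEmbedding := by
    ext x
    simp only [Finset.mem_filter, Finset.mem_map, Finset.mem_Iio]
    constructor
    · rintro ⟨hx, hxt⟩
      refine ⟨(S.orderIsoOfFin rfl).symm ⟨x, hx⟩, ?_, ?_⟩
      · rw [hr]
        exact (S.orderIsoOfFin rfl).symm.lt_iff_lt.2 hxt
      · change S.orderEmbOfFin rfl _ = x
        rw [← Finset.coe_orderIsoOfFin_apply, OrderIso.apply_symm_apply]
    · rintro ⟨y, hy, rfl⟩
      refine ⟨Finset.orderEmbOfFin_mem _ _ _, ?_⟩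
      rw [← hrt]
      exact (S.orderEmbOfFin rfl).lt_iff_lt.2 hy
  rw [this, Finset.card_map, Fin.card_Iio]

theorem word_eq {α : Type*} [Inhabited α] (il jl : List α)
    (S : Finset (Fin (il.length + jl.length))) (hS : S.card = il.length) :
    (List.ofFn fun t => Fin.append il.get jl.get (shuffPerm S t)) =
      word (fun r => il.getD r default) (fun r => jl.getD r default)
        (S.map Fin.valEmbedding) (il.length + jl.length) := by
  have hmem : ∀ t : Fin (il.length + jl.length), (t : ℕ) ∈ S.map Fin.valEmbedding ↔ t ∈ S := by
    intro t
    exact Finset.mem_map' Fin.valEmbedding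
  have hcard : ∀ (P : Fin (il.length + jl.length) → Prop) (Q : ℕ → Prop) [DecidablePred P]
      [DecidablePred Q] (t : Fin (il.length + jl.length)), (∀ s, P s ↔ Q s) →
      ((Finset.univ.filter P).filter (· < t)).card = ((Finset.range t).filter Q).card := by
    intro P Q _ _ t hPQ
    rw [← Finset.card_map Fin.valEmbedding]
    congr 1
    ext x
    simp only [Finset.mem_map, Finset.mem_filter, Finset.mem_univ, true_and, Finset.mem_range,
      Fin.valEmbedding_apply]
    constructor
    · rintro ⟨s, ⟨h1, h2⟩, rfl⟩
      exact ⟨h2, (hPQ s).1 h1⟩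
    · rintro ⟨h1, h2⟩
      exact ⟨⟨x, h1.trans t.2⟩, ⟨(hPQ _).2 h2, h1⟩, rfl⟩
  apply List.ext_getElem
  · simp [word]
  intro m h1 h2
  have hm : m < il.length + jl.length := by simpa using h1
  simp only [List.getElem_ofFn, word, List.getElem_map, List.getElem_range]
  rw [letter]
  by_cases h : (⟨m, hm⟩ : Fin (il.length + jl.length)) ∈ S
  · rw [if_pos ((hmem ⟨m, hm⟩).2 h)]
    have hr := rank_eq S ⟨m, hm⟩ h
    have hlt := ((S.orderIsoOfFin rfl).symm ⟨⟨m, hm⟩, h⟩).isLt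
    have hc := hcard (· ∈ S) (· ∈ S.map Fin.valEmbedding) ⟨m, hm⟩ (fun s => (hmem s).symm)
    simp only [Finset.filter_univ_mem] at hc
    rw [hc] at hr
    rw [hr, hS] at hlt
    have hv : shuffPerm S ⟨m, hm⟩ = Fin.castAdd jl.length ⟨_, hlt⟩ := by
      apply Fin.ext
      rw [shuffPerm, dif_pos h]
      exact hr
    rw [hv, Fin.append_left, List.getD_eq_getElem _ _ hlt]
    rfl
  · rw [if_neg (fun h' => h ((hmem ⟨m, hm⟩).1 h'))]
    have h' := Finset.mem_compl.2 h
    have hr := rank_eq Sᶜ ⟨m, hm⟩ h'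
    have hlt := ((Sᶜ.orderIsoOfFin rfl).symm ⟨⟨m, hm⟩, h'⟩).isLt
    have hc := hcard (· ∈ Sᶜ) (· ∉ S.map Fin.valEmbedding) ⟨m, hm⟩
      (fun s => by rw [hmem s, Finset.mem_compl])
    simp only [Finset.filter_univ_mem] at hc
    rw [hc] at hr
    have hSc : Sᶜ.card = jl.length := by
      have := S.card_add_card_compl
      rw [Fintype.card_fin] at this
      omega
    rw [hr, hSc] at hlt
    have hv : shuffPerm S ⟨m, hm⟩ = Fin.natAdd il.length ⟨_, hlt⟩ := by
      apply Fin.ext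
      rw [shuffPerm, dif_neg h]
      simp only [Fin.val_natAdd]
      rw [hr, hS]
    rw [hv, Fin.append_right, List.getD_eq_getElem _ _ hlt]
    rfl

theorem map_range_getD {α : Type*} [Inhabited α] (l : List α) :
    (List.range l.length).map (fun r => l.getD r default) = l := by
  apply List.ext_getElem
  · simp
  · intro m h1 h2
    simp [h2]

theorem shuffle_aux {n : ℕ} [Inhabited (Fin n)] (γ : ℝ → (Fin n → ℝ))
    (hγ : PiecewiseSmooth γ) (il jl : List (Fin n)) :
    elemIterInt γ il * elemIterInt γ jl =
      ∑ S ∈ Finset.powersetCard il.length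
          (Finset.univ : Finset (Fin (il.length + jl.length))),
        elemIterInt γ (List.ofFn fun t => Fin.append il.get jl.get (shuffPerm S t)) := by
  have key := chenS_mul hγ (fun r => il.getD r default) (fun r => jl.getD r default)
    _ il.length jl.length rfl 1 right_mem_uIcc
  rw [map_range_getD, map_range_getD] at key
  unfold elemIterInt
  rw [key, shSum]
  have hr : Finset.range (il.length + jl.length) =
      (Finset.univ : Finset (Fin (il.length + jl.length))).map Fin.valEmbedding := by
    ext x
    simp only [Finset.mem_range, Finset.mem_map, Finset.mem_univ, true_and,
      Fin.valEmbedding_apply]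
    exact ⟨fun h => ⟨⟨x, h⟩, rfl⟩, by rintro ⟨y, rfl⟩; exact y.2⟩
  rw [hr, Finset.powersetCard_map, Finset.sum_map]
  apply Finset.sum_congr rfl
  intro S hS
  rw [word_eq il jl S (Finset.mem_powersetCard.1 hS).2]
  rfl

/-- **shuffle product.** The product of two elementary iterated integrals
along a piecewise smooth path `γ` is the sum, over the `C(k+l,k)` interleavings of the
two index sequences (encoded by the subsets `S ⊆ Fin (k+l)` of cardinality `k`,
preserving the relative order within each sequence), of elementary iterated integrals.
In particular any finite product of elementary iterated integrals along `γ` is a linear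
combination of elementary iterated integrals along `γ`. -/
theorem elemIterInt_mul_shuffle {n : ℕ} (γ : ℝ → (Fin n → ℝ))
    (hγ : PiecewiseSmooth γ) (il jl : List (Fin n)) :
    elemIterInt γ il * elemIterInt γ jl =
      ∑ S ∈ Finset.powersetCard il.length
          (Finset.univ : Finset (Fin (il.length + jl.length))),
        elemIterInt γ (List.ofFn fun t => Fin.append il.get jl.get (shuffPerm S t)) := by
  rcases n with _ | n
  · obtain rfl : il = [] := by
      rcases il with _ | ⟨x, _⟩
      · rfl
      · exact x.elim0
    obtain rfl : jl = [] := by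
      rcases jl with _ | ⟨x, _⟩
      · rfl
      · exact x.elim0
    simp [elemIterInt, chenS]
  · exact shuffle_aux γ hγ il jl

end ChenPaper
end
end
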